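/- arXiv:2507.09290 — 5 statements merged into one kernel-verified Lean document; each statement's English description precedes it below -/
import Mathlib

section
/- Let n = rm with r, m > 1, let 1 ≤ k ≤ m, let V₁ ∈ G_q(m,k), and let Φ: F_{q^m} → F_{q^n} be an injective F_q-linear map whose image V₂ = Im(Φ) lies in G_q(n,m). Set C₂ = Orb(V₂). If C₂ has full-length and d(C₂) > 2(m−k), then the one-orbit code Orb(Φ(V₁)) has full-length, and moreover for every α ∈ F_{q^m}* the orbit Orb(Φ(αV₁)) has full-length; that is, for every α ∈ F_{q^m}* and every β ∈ F_{q^n}*, the equality β·Φ(αV₁) = Φ(αV₁) forces β ∈ F_q*. -/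
/-!
Suppose `β ≠ 0` stabilizes a `k`-dimensional subspace `U` of the `m`-dimensional space `V₂ = Im Φ`.
Then `U = βU` lies in `V₂ ∩ βV₂`, so `d(V₂, βV₂) = 2m - 2 dim (V₂ ∩ βV₂) ≤ 2(m - k)`. As this is
below the minimum distance of `Orb(V₂)`, the codewords `V₂` and `βV₂` coincide, and the full-length
hypothesis on `V₂` gives `β ∈ F_q`. Both conclusions are instances of this
(`fullLengthOrbit_of_le`), since `Φ(V₁)` and `Φ(αV₁)` are `k`-dimensional subspaces of `V₂`.
-/

open Module Submodule Filter

noncomputable section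

/-- For `α` in a field `F` and an `Fq`-subspace `V` of `F`,
the subspace `α·V = {α·v : v ∈ V}`. -/
def mulSub {Fq F : Type*} [Field Fq] [Field F] [Algebra Fq F]
    (α : F) (V : Submodule Fq F) : Submodule Fq F :=
  V.map (LinearMap.mulLeft Fq α)

/-- The orbit `Orb(V) = {α·V : α ∈ Fˣ}` of a subspace `V` under the Singer cycle. -/
def orb {Fq F : Type*} [Field Fq] [Field F] [Algebra Fq F]
    (V : Submodule Fq F) : Set (Submodule Fq F) :=
  {W | ∃ α : Fˣ, W = mulSub (α : F) V}

/-- The subspace distance `d(U,W) = dim(U+W) - dim(U∩W)`. -/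
def sdist {Fq F : Type*} [Field Fq] [Field F] [Algebra Fq F]
    (U W : Submodule Fq F) : ℕ :=
  finrank Fq ↥(U ⊔ W) - finrank Fq ↥(U ⊓ W)

/-- The minimum distance of a subspace code `C`:
the minimum of `d(U,W)` over distinct `U, W ∈ C`. -/
def minDist {Fq F : Type*} [Field Fq] [Field F] [Algebra Fq F]
    (C : Set (Submodule Fq F)) : ℕ :=
  sInf {d : ℕ | ∃ U ∈ C, ∃ W ∈ C, U ≠ W ∧ d = sdist U W}

/-- `Orb(V)` has full-length, i.e. the stabilizer of `V` is `Fq^*`: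
`β·V = V` with `β ≠ 0` forces `β ∈ Fq`. -/
def FullLengthOrbit {Fq F : Type*} [Field Fq] [Field F] [Algebra Fq F]
    (V : Submodule Fq F) : Prop :=
  ∀ β : F, β ≠ 0 → mulSub β V = V → β ∈ Set.range (algebraMap Fq F)

theorem mulSub_one {Fq F : Type*} [Field Fq] [Field F] [Algebra Fq F] (V : Submodule Fq F) :
    mulSub 1 V = V := by
  simp [mulSub]

theorem finrank_mulSub {Fq F : Type*} [Field Fq] [Field F] [Algebra Fq F]
    {α : F} (hα : α ≠ 0) (V : Submodule Fq F) :
    finrank Fq ↥(mulSub α V) = finrank Fq ↥V :=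
  (Submodule.equivMapOfInjective (LinearMap.mulLeft Fq α)
    (fun _ _ h => mul_left_cancel₀ hα h) V).finrank_eq.symm

/-- Full length passes from `V` to any subspace `U` of `V` whose codimension in `V` is less than
half the minimum distance of `Orb(V)`. -/
theorem fullLengthOrbit_of_le {Fq F : Type*} [Field Fq] [Field F] [Algebra Fq F]
    [FiniteDimensional Fq F] {U V : Submodule Fq F} (hUV : U ≤ V) (hV : FullLengthOrbit V)
    (hdist : 2 * (finrank Fq ↥V - finrank Fq ↥U) < minDist (orb V)) :
    FullLengthOrbit U := by
  intro β hβ hU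
  refine hV β hβ ?_
  by_contra hne
  have hmem : V ∈ orb V := ⟨1, by simp [mulSub_one]⟩
  have hmem' : mulSub β V ∈ orb V := ⟨Units.mk0 β hβ, rfl⟩
  have hle : minDist (orb V) ≤ sdist (mulSub β V) V :=
    Nat.sInf_le ⟨_, hmem', _, hmem, hne, rfl⟩
  have hUβ : U ≤ mulSub β V := hU.symm.le.trans (Submodule.map_mono hUV)
  have hinf : finrank Fq ↥U ≤ finrank Fq ↥(mulSub β V ⊓ V) :=
    Submodule.finrank_mono (le_inf hUβ hUV)
  have hsum := Submodule.finrank_sup_add_finrank_inf_eq (mulSub β V) V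
  rw [finrank_mulSub hβ] at hsum
  unfold sdist at hle
  omega

/-- If `C₂ = Orb(V₂)` has full-length and `d(C₂) > 2(m-k)`, then
`Orb(Φ(V₁))` and every `Orb(Φ(α·V₁))` have full-length. -/
theorem statement0
    {Fq Fm Fn : Type*} [Field Fq] [Field Fm] [Field Fn] [Fintype Fq]
    [Algebra Fq Fm] [Algebra Fq Fn]
    (q r m n k : ℕ) (hq : Fintype.card Fq = q)
    (hr : 1 < r) (hm1 : 1 < m) (hn : n = r * m)
    (hdm : finrank Fq Fm = m) (hdn : finrank Fq Fn = n)
    (hk1 : 1 ≤ k) (hkm : k ≤ m)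
    (V₁ : Submodule Fq Fm) (hV₁ : finrank Fq ↥V₁ = k)
    (Φ : Fm →ₗ[Fq] Fn) (hΦinj : Function.Injective Φ)
    (hV₂ : finrank Fq ↥(LinearMap.range Φ) = m)
    (hfull : ∀ X ∈ orb (LinearMap.range Φ), FullLengthOrbit X)
    (hdist : 2 * (m - k) < minDist (orb (LinearMap.range Φ))) :
    FullLengthOrbit (Submodule.map Φ V₁) ∧
      ∀ (α : Fmˣ) (β : Fn), β ≠ 0 →
        mulSub β (Submodule.map Φ (mulSub (α : Fm) V₁)) =
          Submodule.map Φ (mulSub (α : Fm) V₁) →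
        β ∈ Set.range (algebraMap Fq Fn) := by
  have hn0 : 0 < finrank Fq Fn := by
    rw [hdn, hn]; positivity
  have : FiniteDimensional Fq Fn := FiniteDimensional.of_finrank_pos hn0
  have hfull₂ : FullLengthOrbit (LinearMap.range Φ) :=
    hfull _ ⟨1, by simp [mulSub_one]⟩
  have key : ∀ W : Submodule Fq Fm, finrank Fq ↥W = k → FullLengthOrbit (W.map Φ) := by
    intro W hW
    refine fullLengthOrbit_of_le LinearMap.map_le_range hfull₂ ?_
    rwa [hV₂, ← (Submodule.equivMapOfInjective Φ hΦinj W).finrank_eq, hW]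
  exact ⟨key V₁ hV₁, fun α => key _ ((finrank_mulSub α.ne_zero V₁).trans hV₁)⟩
end
end

section
/- Let q be a prime power, let k ≥ 2, let p be an odd prime, n = pk, and ℓ = (p−3)/2. Let ω be a primitive element of F_{q^k} and let γ ∈ F_{q^n} satisfy F_{q^k}(γ) = F_{q^n}. For every integer 0 ≤ ℓ₀ ≤ ℓ, every tuple α = (α₁,…,α_{ℓ₀}) ∈ F_{q^k}^{ℓ₀} with α_{ℓ₀} ≠ 0 when ℓ₀ ≥ 1, every a ∈ F_{q^k}, every integer 0 ≤ j ≤ q−2, and every integer ℓ₀ ≤ ℓ₁ ≤ ℓ, define V_{(α,a,j,ℓ₁)} = { u·(1 + α₁γ + ⋯ + α_{ℓ₀}γ^{ℓ₀}) + ω^j·(u^q + a·u)·γ^{ℓ₁+1} : u ∈ F_{q^k} }. Then each V_{(α,a,j,ℓ₁)} belongs to G_q(n,k), and the union C of the orbits Orb(V_{(α,a,j,ℓ₁)}) over all such indices is a cyclic subspace code with cardinality |C| = q^k·(q^{(ℓ+1)k}−1)·(q^n−1)/(q^k−1) and minimum distance d(C) = 2k − 2. -/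
/-!
Write `P = 1 + α₁ X + ⋯`, a polynomial over `F_{q^k}` of degree at most `ℓ₁` with constant term
`1`. The elements of a subspace `V` are values at `γ` of polynomials of degree at most `ℓ + 1`, and
`γ` has degree `p > 2 (ℓ + 1)` over `F_{q^k}`, so an equation between products of two such
elements is an identity of polynomials.

Suppose `β V` and `β' V'` share two vectors that are independent over `F_q`, with parameters
`u₁, u₂` in `V` and `v₁, v₂` in `V'`. Cross-multiplying eliminates `β, β'`. The constant term gives
`vᵢ = λ uᵢ`, and after division by `u₁ u₂^q - u₂ u₁^q ≠ 0` there remains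
`c' λ^q X^m' P - c λ X^m P' + c c' (a λ^q - b λ) X^(m + m') = 0`, where `m = ℓ₁ + 1`, `c = ω^j`, and
primes and `b` refer to `V'` (`codePoly_rigid`). Hence `m = m'`, `P = P'` and `c = c' λ^(q-1)`. As
`ω` is primitive, the last equation forces `j = j'` (`exponent_eq`), so `λ^q = λ`, `λ ∈ F_q`,
`a = b`, and `β / β' ∈ F_q` (`CodeSetup.rigid`).

So distinct codewords meet in dimension at most one, which bounds the distance below by `2 k - 2`;
the translates `v₂ V` and `v₁ V` with independent `v₁, v₂ ∈ V` attain the bound. Moreover every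
fibre of `(parameters, β) ↦ β V` is a coset of `F_q^*`. There are `q^(ℓ₁ k)` polynomials `P` for
each `ℓ₁`, so the cardinality follows from a geometric sum.
-/

open Module Submodule Filter

noncomputable section

section CodeProof

open Polynomial

/-! ### Arithmetic in the middle field -/

/-- The fixed points of the `q`-Frobenius are exactly the elements of `F_q`. -/
lemma mem_base_of_pow_card {Fq Fm : Type*} [Field Fq] [Field Fm] [Fintype Fq] [Algebra Fq Fm]
    {t : Fm} (ht : t ^ Fintype.card Fq = t) : ∃ s : Fq, algebraMap Fq Fm s = t := by
  classical
  have hq : 1 < Fintype.card Fq := Fintype.one_lt_card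
  have hne : (X ^ Fintype.card Fq - X : Fm[X]) ≠ 0 := FiniteField.X_pow_card_sub_X_ne_zero Fm hq
  have hsub : Finset.univ.image (algebraMap Fq Fm) ⊆
      (X ^ Fintype.card Fq - X : Fm[X]).roots.toFinset := by
    intro x hx
    obtain ⟨s, -, rfl⟩ := Finset.mem_image.1 hx
    simp [hne, ← map_pow, FiniteField.pow_card]
  -- `X ^ q - X` has at most `q` roots, so the `q` elements of `F_q` are all of them.
  have heq := Finset.eq_of_subset_of_card_le hsub (by
    rw [Finset.card_image_of_injective _ (algebraMap Fq Fm).injective, Finset.card_univ]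
    refine (Multiset.toFinset_card_le _).trans ((card_roots' _).trans ?_)
    rw [FiniteField.X_pow_card_sub_X_natDegree_eq Fm hq])
  have hmem : t ∈ (X ^ Fintype.card Fq - X : Fm[X]).roots.toFinset := by
    simp [hne, ht]
  rw [← heq] at hmem
  obtain ⟨s, -, hs⟩ := Finset.mem_image.1 hmem
  exact ⟨s, hs⟩

lemma primitive_ne_zero (Fq : Type*) {Fm : Type*} [Field Fq] [Field Fm] [Fintype Fq]
    [Algebra Fq Fm] [Module.Finite Fq Fm] {ω : Fm} (hω : ∀ x : Fm, x ≠ 0 → ∃ i : ℕ, ω ^ i = x)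
    (hk : 2 ≤ finrank Fq Fm) : ω ≠ 0 := by
  have : Finite Fm := Module.finite_of_finite Fq
  rintro rfl
  have hsub : (Set.univ : Set Fm) ⊆ {0, 1} := by
    intro x _
    by_cases hx : x = 0
    · simp [hx]
    · obtain ⟨i, hi⟩ := hω x hx
      rcases Nat.eq_zero_or_pos i with rfl | hi0
      · simp at hi; simp [hi]
      · rw [zero_pow hi0.ne'] at hi; exact absurd hi.symm hx
  have h1 := Set.ncard_le_ncard hsub (Set.toFinite _)
  have h2 : ({0, 1} : Set Fm).ncard ≤ 2 := Set.ncard_insert_le _ _ |>.trans (by simp)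
  rw [Set.ncard_univ, Module.natCard_eq_pow_finrank (K := Fq), Nat.card_eq_fintype_card] at h1
  have h3 : 2 ^ 2 ≤ Fintype.card Fq ^ finrank Fq Fm := (Nat.pow_le_pow_left Fintype.one_lt_card 2).trans
    (Nat.pow_le_pow_right Fintype.card_pos hk)
  omega

/-- If `ω` is primitive in `F_{q^k}`, then `1, ω, …, ω^(q-2)` lie in different cosets of the
`(q-1)`-th powers, because `q - 1` divides the order `q^k - 1` of `ω`. -/
lemma exponent_eq {Fm : Type*} [Field Fm] [Finite Fm] {q k : ℕ} (hq : 2 ≤ q)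
    (hcard : Nat.card Fm = q ^ k)
    {ω : Fm} (hω0 : ω ≠ 0) (hω : ∀ x : Fm, x ≠ 0 → ∃ i : ℕ, ω ^ i = x)
    {lam : Fm} (hlam : lam ≠ 0) {j j' : ℕ} (hj : j < q - 1) (hj' : j' < q - 1)
    (h : ω ^ j' * lam ^ q = ω ^ j * lam) : j = j' := by
  have hord : orderOf (Units.mk0 ω hω0) = q ^ k - 1 := by
    rw [orderOf_eq_card_of_forall_mem_zpowers, Nat.card_units, hcard]
    intro x
    obtain ⟨i, hi⟩ := hω x x.ne_zero
    exact ⟨i, by ext; simpa using hi⟩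
  obtain ⟨i, rfl⟩ := hω lam hlam
  have h2 : (Units.mk0 ω hω0) ^ (j' + i * (q - 1)) = (Units.mk0 ω hω0) ^ j := by
    ext
    simp only [Units.val_pow_eq_pow_val, Units.val_mk0]
    apply mul_right_cancel₀ hlam
    rw [← h, ← pow_mul, ← pow_add, ← pow_add]
    congr 1
    obtain ⟨r, rfl⟩ : ∃ r, q = r + 1 := ⟨q - 1, by omega⟩
    simp; ring
  rw [pow_eq_pow_iff_modEq, hord] at h2
  have hdvd : q - 1 ∣ q ^ k - 1 := by simpa using Nat.sub_dvd_pow_sub_pow q 1 k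
  have h3 := h2.of_dvd hdvd
  have h4 : j' ≡ j [MOD q - 1] := by
    have : j' + i * (q - 1) ≡ j' [MOD q - 1] := by simp [Nat.ModEq]
    exact this.symm.trans h3
  exact (Nat.ModEq.eq_of_lt_of_lt h4 hj' hj).symm

/-! ### The polynomial identity -/

/-- The polynomial over `F_{q^k}` whose value at `γ` is the element of the subspace with
parameter `u`. The index `P` stands for `1 + α₁ X + ⋯` and `c` for `ω ^ j`. -/
def codePoly {K : Type*} [Field K] (q : ℕ) (P : K[X]) (a c : K) (m : ℕ) (u : K) : K[X] :=
  C u * P + C (c * (u ^ q + a * u)) * X ^ m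

lemma natDegree_codePoly_le {K : Type*} [Field K] {q : ℕ} {P : K[X]} {a c : K} {m : ℕ}
    (hP : P.natDegree ≤ m) (u : K) : (codePoly q P a c m u).natDegree ≤ m := by
  refine natDegree_add_le_of_degree_le ?_ (natDegree_C_mul_X_pow_le _ _)
  exact (natDegree_C_mul_le _ _).trans hP

/-- If two codewords from subspaces with parameters `(P, a, c, m)` and `(P', b, c', m')` have the
same ratio, then comparing constant terms gives `v = λ u`, and the rest of the identity,
divided by the Moore determinant `u₁ u₂^q - u₂ u₁^q`, reads
`c' λ^q X^m' P - c λ X^m P' + c c' (a λ^q - b λ) X^(m + m') = 0`.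
Its lowest coefficients then give the equality of the parameters up to `λ`. -/
lemma codePoly_rigid {K : Type*} [Field K] {q : ℕ} {P P' : K[X]} {a b c c' : K} {m m' : ℕ}
    (hP : P.natDegree < m) (hP' : P'.natDegree < m')
    (hP1 : P.coeff 0 = 1) (hP1' : P'.coeff 0 = 1) (hc : c ≠ 0) (hc' : c' ≠ 0)
    {u1 u2 v1 v2 : K} (hu1 : u1 ≠ 0) (hv1 : v1 ≠ 0) (hD : u1 * u2 ^ q - u2 * u1 ^ q ≠ 0)
    (h : codePoly q P a c m u1 * codePoly q P' b c' m' v2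
      = codePoly q P a c m u2 * codePoly q P' b c' m' v1) :
    ∃ lam : K, lam ≠ 0 ∧ v1 = lam * u1 ∧ v2 = lam * u2 ∧ m = m' ∧ P = P' ∧
      c' * lam ^ q = c * lam ∧ a * lam ^ q = b * lam := by
  have hm : m ≠ 0 := by omega
  have hm' : m' ≠ 0 := by omega
  have h0 : u1 * v2 = u2 * v1 := by
    have := congrArg (fun f => f.coeff 0) h
    simpa [codePoly, mul_coeff_zero, hP1, hP1', coeff_X_pow, hm, hm', Ne.symm hm, Ne.symm hm'] using this
  obtain ⟨lam, hlam⟩ : ∃ lam, lam = v1 / u1 := ⟨_, rfl⟩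
  have hv1' : v1 = lam * u1 := by rw [hlam]; field_simp
  have hv2' : v2 = lam * u2 := by
    apply mul_left_cancel₀ hu1; rw [h0, hv1']; ring
  have hl0 : lam ≠ 0 := by rw [hlam]; exact div_ne_zero hv1 hu1
  have hmain : C (c' * lam ^ q) * X ^ m' * P - C (c * lam) * X ^ m * P'
      + C (c * c' * (a * lam ^ q - b * lam)) * X ^ (m + m') = 0 := by
    have hD' : (C (u1 * u2 ^ q - u2 * u1 ^ q) : K[X]) ≠ 0 := C_ne_zero.2 hD
    apply mul_left_cancel₀ hD'
    rw [mul_zero, ← sub_eq_zero.2 h]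
    subst hv1' hv2'
    simp only [codePoly, C_mul, C_add, C_sub, C_pow, mul_pow, pow_add]
    ring
  have hs : c' * lam ^ q ≠ 0 := mul_ne_zero hc' (pow_ne_zero _ hl0)
  have hs' : c * lam ≠ 0 := mul_ne_zero hc hl0
  have hcoeff : ∀ n, c' * lam ^ q * (if m' ≤ n then P.coeff (n - m') else 0)
      - c * lam * (if m ≤ n then P'.coeff (n - m) else 0)
      + c * c' * (a * lam ^ q - b * lam) * (if n = m + m' then 1 else 0) = 0 := by
    intro n
    have := congrArg (fun f => f.coeff n) hmain
    simpa only [coeff_add, coeff_sub, mul_assoc, coeff_C_mul, coeff_X_pow_mul', coeff_X_pow,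
      coeff_zero] using this
  have hmm : m = m' := by
    rcases lt_trichotomy m m' with hlt | heq | hlt
    · have := hcoeff m
      simp [hP1', hlt.not_ge, hm'] at this
      tauto
    · exact heq
    · have := hcoeff m'
      simp [hP1, hlt.not_ge, hm] at this
      tauto
  subst hmm
  have hcc : c' * lam ^ q = c * lam := by
    have := hcoeff m
    simp [hP1, hP1', hm] at this
    exact sub_eq_zero.1 this
  have hab : a * lam ^ q = b * lam := by
    have := hcoeff (m + m)
    simp [coeff_eq_zero_of_natDegree_lt hP, coeff_eq_zero_of_natDegree_lt hP', hc, hc'] at this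
    exact sub_eq_zero.1 this
  refine ⟨lam, hl0, hv1', hv2', rfl, ?_, hcc, hab⟩
  ext n
  have := hcoeff (m + n)
  rw [hab, hcc, sub_self, mul_zero, zero_mul, add_zero] at this
  simp only [le_add_iff_nonneg_right, zero_le, if_true, Nat.add_sub_cancel_left] at this
  exact mul_left_cancel₀ hs' (sub_eq_zero.1 this)

/-! ### The subspaces and their translates -/

set_option linter.unusedSectionVars false

variable {Fq Fm Fn : Type*} [Field Fq] [Field Fm] [Field Fn] [Fintype Fq]
  [Algebra Fq Fm] [Algebra Fq Fn] [Algebra Fm Fn] [IsScalarTower Fq Fm Fn]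

/-- The `F_q`-linear parametrization `u ↦ u P(γ) + c (u^q + a u) γ^(l+1)`. -/
def codeMap (Fq : Type*) {Fm Fn : Type*} [Field Fq] [Field Fm] [Field Fn] [Fintype Fq]
    [Algebra Fq Fm] [Algebra Fq Fn] [Algebra Fm Fn] [IsScalarTower Fq Fm Fn]
    (γ : Fn) (P : Fm[X]) (a c : Fm) (l : ℕ) : Fm →ₗ[Fq] Fn where
  toFun u := aeval γ (codePoly (Fintype.card Fq) P a c (l + 1) u)
  map_add' u v := by
    have h : (u + v) ^ Fintype.card Fq = u ^ Fintype.card Fq + v ^ Fintype.card Fq :=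
      map_add (FiniteField.frobeniusAlgHom Fq Fm) u v
    rw [← map_add]
    congr 1
    simp only [codePoly, h, C_mul, C_add]
    ring
  map_smul' t u := by
    have h : (t • u) ^ Fintype.card Fq = t • u ^ Fintype.card Fq :=
      map_smul (FiniteField.frobeniusAlgHom Fq Fm) t u
    have h2 : codePoly (Fintype.card Fq) P a c (l + 1) (t • u)
        = C (algebraMap Fq Fm t) * codePoly (Fintype.card Fq) P a c (l + 1) u := by
      rw [codePoly, h]
      simp only [codePoly, C_mul, C_add, Algebra.smul_def]
      ring
    rw [h2, map_mul, aeval_C, ← IsScalarTower.algebraMap_apply, RingHom.id_apply,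
      Algebra.smul_def]

lemma codeMap_apply (γ : Fn) (P : Fm[X]) (a c : Fm) (l : ℕ) (u : Fm) :
    codeMap Fq γ P a c l u = aeval γ (codePoly (Fintype.card Fq) P a c (l + 1) u) := rfl

/-- The facts about the tower `F_q ⊆ F_{q^k} ⊆ F_{q^n}` used below; `L` stands for `ℓ + 1`, and
`inj` says that the degree of `γ` over `F_{q^k}` exceeds `2 L`. -/
structure CodeSetup (Fq : Type*) {Fm Fn : Type*} [Field Fq] [Field Fm] [Field Fn]
    [Algebra Fq Fm] [Algebra Fm Fn] (k L : ℕ) (ω : Fm) (γ : Fn) : Prop where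
  two_le : 2 ≤ k
  finrank_eq : finrank Fq Fm = k
  prim : ∀ x : Fm, x ≠ 0 → ∃ i : ℕ, ω ^ i = x
  ne_zero : ω ≠ 0
  inj : ∀ r : Fm[X], r.natDegree ≤ 2 * L → aeval γ r = 0 → r = 0

namespace CodeSetup

variable {k L : ℕ} {ω : Fm} {γ : Fn}

lemma finite_mid (S : CodeSetup Fq k L ω γ) : Finite Fm := by
  have : Module.Finite Fq Fm := Module.finite_of_finrank_pos (by
    have := S.two_le; rw [S.finrank_eq]; omega)
  exact Module.finite_of_finite Fq

lemma card_mid (S : CodeSetup Fq k L ω γ) : Nat.card Fm = Fintype.card Fq ^ k := by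
  have : Module.Finite Fq Fm := Module.finite_of_finrank_pos (by
    have := S.two_le; rw [S.finrank_eq]; omega)
  rw [← S.finrank_eq, Module.natCard_eq_pow_finrank (K := Fq), Nat.card_eq_fintype_card]

lemma codeMap_injective (S : CodeSetup Fq k L ω γ) {P : Fm[X]} (hP1 : P.coeff 0 = 1)
    {l : ℕ} (hl : l < L) (hP : P.natDegree ≤ l) (a c : Fm) :
    Function.Injective (codeMap Fq γ P a c l) := by
  rw [injective_iff_map_eq_zero]
  intro u hu
  have h := S.inj _ ((natDegree_codePoly_le (hP.trans (Nat.le_succ l)) u).trans (by omega)) hu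
  simpa [codePoly, hP1, mul_coeff_zero] using congrArg (fun f => f.coeff 0) h

/-- Two translates meeting in two vectors that are independent over `F_q` have the same
parameters, and the two scalars differ by a factor in `F_q`. -/
lemma rigid (S : CodeSetup Fq k L ω γ)
    {P P' : Fm[X]} (hP1 : P.coeff 0 = 1) (hP1' : P'.coeff 0 = 1)
    {l l' : ℕ} (hl : l < L) (hl' : l' < L) (hP : P.natDegree ≤ l) (hP' : P'.natDegree ≤ l')
    {a a' : Fm} {j j' : ℕ} (hj : j < Fintype.card Fq - 1) (hj' : j' < Fintype.card Fq - 1)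
    {β β' : Fn} (hβ : β ≠ 0) (hβ' : β' ≠ 0) {u1 u2 v1 v2 : Fm} (hu1 : u1 ≠ 0)
    (hD : u1 * u2 ^ Fintype.card Fq - u2 * u1 ^ Fintype.card Fq ≠ 0)
    (h1 : β * codeMap Fq γ P a (ω ^ j) l u1 = β' * codeMap Fq γ P' a' (ω ^ j') l' v1)
    (h2 : β * codeMap Fq γ P a (ω ^ j) l u2 = β' * codeMap Fq γ P' a' (ω ^ j') l' v2) :
    l = l' ∧ P = P' ∧ a = a' ∧ j = j' ∧ ∃ t : Fq, β = algebraMap Fq Fn t * β' := by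
  have hinj := S.codeMap_injective hP1 hl hP a (ω ^ j)
  have hΦ : codeMap Fq γ P a (ω ^ j) l u1 ≠ 0 := by
    rwa [Ne, map_eq_zero_iff _ hinj]
  have hv1 : v1 ≠ 0 := by
    rintro rfl
    rw [map_zero, mul_zero] at h1
    exact mul_ne_zero hβ hΦ h1
  have hprod : codePoly (Fintype.card Fq) P a (ω ^ j) (l + 1) u1
        * codePoly (Fintype.card Fq) P' a' (ω ^ j') (l' + 1) v2
      = codePoly (Fintype.card Fq) P a (ω ^ j) (l + 1) u2
        * codePoly (Fintype.card Fq) P' a' (ω ^ j') (l' + 1) v1 := by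
    rw [← sub_eq_zero]
    apply S.inj
    · have hd : ∀ u v, (codePoly (Fintype.card Fq) P a (ω ^ j) (l + 1) u
        * codePoly (Fintype.card Fq) P' a' (ω ^ j') (l' + 1) v).natDegree ≤ 2 * L := fun u v =>
        natDegree_mul_le.trans ((add_le_add
          (natDegree_codePoly_le (hP.trans (Nat.le_succ l)) u)
          (natDegree_codePoly_le (hP'.trans (Nat.le_succ l')) v)).trans (by omega))
      exact (natDegree_sub_le _ _).trans (max_le (hd _ _) (hd _ _))
    · rw [map_sub, map_mul, map_mul, sub_eq_zero]
      simp only [← codeMap_apply]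
      apply mul_left_cancel₀ (mul_ne_zero hβ hβ')
      linear_combination (β' * codeMap Fq γ P' a' (ω ^ j') l' v2) * h1
        - (β' * codeMap Fq γ P' a' (ω ^ j') l' v1) * h2
  obtain ⟨lam, hl0, hv1', -, hm, hPP, hc, ha⟩ := codePoly_rigid (Nat.lt_succ_of_le hP)
    (Nat.lt_succ_of_le hP') hP1 hP1' (pow_ne_zero j S.ne_zero) (pow_ne_zero j' S.ne_zero)
    hu1 hv1 hD hprod
  obtain rfl : l = l' := by omega
  subst hPP
  have := S.finite_mid
  have hjj : j = j' := exponent_eq Fintype.one_lt_card S.card_mid S.ne_zero S.prim hl0 hj hj' hc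
  subst hjj
  have hfix : lam ^ Fintype.card Fq = lam := mul_left_cancel₀ (pow_ne_zero j S.ne_zero) hc
  rw [hfix] at ha
  obtain rfl : a = a' := mul_right_cancel₀ hl0 ha
  obtain ⟨t, rfl⟩ := mem_base_of_pow_card hfix
  refine ⟨rfl, rfl, rfl, rfl, t, mul_right_cancel₀ hΦ ?_⟩
  rw [h1, hv1', ← Algebra.smul_def, map_smul, Algebra.smul_def]
  ring

/-- `F_{q^k}` is strictly larger than `F_q`. -/
lemma exists_not_base (S : CodeSetup Fq k L ω γ) : ∃ u : Fm, ∀ t : Fq, algebraMap Fq Fm t ≠ u := by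
  by_contra! h
  have : finrank Fq Fm ≤ 1 := finrank_le_one (1 : Fm) fun w => by
    obtain ⟨t, ht⟩ := h w
    exact ⟨t, by rw [← ht, Algebra.algebraMap_eq_smul_one]⟩
  have := S.two_le
  rw [S.finrank_eq] at *
  omega

end CodeSetup

/-- The parameters of the code: `l` is `ℓ₁`, the polynomial `R` of degree `< l` encodes
`P = 1 + X R`, and the last two components are `a` and `j`. -/
abbrev CodeIdx (Fm : Type*) [Field Fm] (q L : ℕ) : Type _ :=
  Σ l : Fin L, degreeLT Fm l × Fm × Fin (q - 1)

/-- The polynomial `1 + α₁ X + ⋯` attached to a parameter. -/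
def CodeIdx.poly {q L : ℕ} (i : CodeIdx Fm q L) : Fm[X] := 1 + X * (i.2.1 : Fm[X])

lemma CodeIdx.coeff_poly {q L : ℕ} (i : CodeIdx Fm q L) : i.poly.coeff 0 = 1 := by
  simp [CodeIdx.poly]

lemma CodeIdx.natDegree_poly {q L : ℕ} (i : CodeIdx Fm q L) : i.poly.natDegree ≤ i.1 := by
  obtain ⟨l, ⟨R, hR⟩, a, j⟩ := i
  simp only [CodeIdx.poly]
  refine natDegree_add_le_of_degree_le (by simp) ?_
  rw [mem_degreeLT] at hR
  by_cases h0 : R = 0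
  · simp [h0]
  · rw [natDegree_X_mul h0]
    exact (natDegree_lt_iff_degree_lt h0).2 hR

/-- The linear parametrization of the subspace with parameter `i`. -/
def idxMap (Fq : Type*) {Fm Fn : Type*} [Field Fq] [Field Fm] [Field Fn] [Fintype Fq]
    [Algebra Fq Fm] [Algebra Fq Fn] [Algebra Fm Fn] [IsScalarTower Fq Fm Fn]
    (ω : Fm) (γ : Fn) {L : ℕ} (i : CodeIdx Fm (Fintype.card Fq) L) : Fm →ₗ[Fq] Fn :=
  codeMap Fq γ i.poly i.2.2.1 (ω ^ (i.2.2.2 : ℕ)) i.1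

/-- The codeword `β V_i`. -/
def codeWord (Fq : Type*) {Fm Fn : Type*} [Field Fq] [Field Fm] [Field Fn] [Fintype Fq]
    [Algebra Fq Fm] [Algebra Fq Fn] [Algebra Fm Fn] [IsScalarTower Fq Fm Fn]
    (ω : Fm) (γ : Fn) {L : ℕ} (x : CodeIdx Fm (Fintype.card Fq) L × Fnˣ) : Submodule Fq Fn :=
  mulSub (x.2 : Fn) (LinearMap.range (idxMap Fq ω γ x.1))

lemma mem_codeWord {ω : Fm} {γ : Fn} {L : ℕ} {x : CodeIdx Fm (Fintype.card Fq) L × Fnˣ} {y : Fn} :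
    y ∈ codeWord Fq ω γ x ↔ ∃ u, (x.2 : Fn) * idxMap Fq ω γ x.1 u = y := by
  simp [codeWord, mulSub]

namespace CodeSetup

variable {k L : ℕ} {ω : Fm} {γ : Fn}

lemma idxMap_injective (S : CodeSetup Fq k L ω γ) (i : CodeIdx Fm (Fintype.card Fq) L) :
    Function.Injective (idxMap Fq ω γ i) :=
  S.codeMap_injective i.coeff_poly i.1.2 i.natDegree_poly _ _

lemma finrank_codeWord (S : CodeSetup Fq k L ω γ) (x : CodeIdx Fm (Fintype.card Fq) L × Fnˣ) :
    finrank Fq (codeWord Fq ω γ x) = k := by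
  have h : Function.Injective (LinearMap.mulLeft Fq (x.2 : Fn)) := fun a b hab =>
    mul_left_cancel₀ x.2.ne_zero hab
  rw [codeWord, mulSub, ← LinearMap.range_comp, LinearMap.finrank_range_of_inj, S.finrank_eq]
  exact h.comp (S.idxMap_injective x.1)

lemma rigid_idx (S : CodeSetup Fq k L ω γ) {x y : CodeIdx Fm (Fintype.card Fq) L × Fnˣ}
    {u1 u2 v1 v2 : Fm} (hu1 : u1 ≠ 0)
    (hD : u1 * u2 ^ Fintype.card Fq - u2 * u1 ^ Fintype.card Fq ≠ 0)
    (h1 : (x.2 : Fn) * idxMap Fq ω γ x.1 u1 = y.2 * idxMap Fq ω γ y.1 v1)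
    (h2 : (x.2 : Fn) * idxMap Fq ω γ x.1 u2 = y.2 * idxMap Fq ω γ y.1 v2) :
    x.1 = y.1 ∧ ∃ t : Fq, (x.2 : Fn) = algebraMap Fq Fn t * y.2 := by
  obtain ⟨i, β⟩ := x
  obtain ⟨i', β'⟩ := y
  obtain ⟨hl, hP, ha, hj, ht⟩ := S.rigid i.coeff_poly i'.coeff_poly i.1.2 i'.1.2
    i.natDegree_poly i'.natDegree_poly i.2.2.2.2 i'.2.2.2.2 β.ne_zero β'.ne_zero hu1 hD h1 h2
  refine ⟨?_, ht⟩
  obtain ⟨l, ⟨R, hR⟩, a, j⟩ := i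
  obtain ⟨l', ⟨R', hR'⟩, a', j'⟩ := i'
  obtain rfl : l = l' := Fin.ext hl
  obtain rfl : j = j' := Fin.ext hj
  obtain rfl : a = a' := ha
  obtain rfl : R = R' := by simpa [CodeIdx.poly] using hP
  rfl

lemma codeWord_smul (ω : Fm) (γ : Fn) (i : CodeIdx Fm (Fintype.card Fq) L) {β β' : Fnˣ} {t : Fq}
    (ht : (β : Fn) = algebraMap Fq Fn t * β') :
    codeWord Fq ω γ (i, β) ≤ codeWord Fq ω γ (i, β') := by
  intro y hy
  obtain ⟨u, rfl⟩ := mem_codeWord.1 hy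
  refine mem_codeWord.2 ⟨t • u, ?_⟩
  simp only [ht]
  rw [map_smul, Algebra.smul_def]
  ring

lemma codeWord_eq_iff (S : CodeSetup Fq k L ω γ) (x y : CodeIdx Fm (Fintype.card Fq) L × Fnˣ) :
    codeWord Fq ω γ x = codeWord Fq ω γ y ↔
      x.1 = y.1 ∧ ∃ t : Fq, (x.2 : Fn) = algebraMap Fq Fn t * y.2 := by
  constructor
  · intro h
    obtain ⟨u, hu⟩ := S.exists_not_base
    have hmem : ∀ u, ∃ v, (x.2 : Fn) * idxMap Fq ω γ x.1 u = y.2 * idxMap Fq ω γ y.1 v := by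
      intro u
      have : (x.2 : Fn) * idxMap Fq ω γ x.1 u ∈ codeWord Fq ω γ y := by
        rw [← h]; exact mem_codeWord.2 ⟨u, rfl⟩
      obtain ⟨v, hv⟩ := mem_codeWord.1 this
      exact ⟨v, hv.symm⟩
    obtain ⟨v1, h1⟩ := hmem 1
    obtain ⟨v2, h2⟩ := hmem u
    refine S.rigid_idx one_ne_zero ?_ h1 h2
    intro h0
    rw [one_mul, one_pow, mul_one, sub_eq_zero] at h0
    obtain ⟨t, ht⟩ := mem_base_of_pow_card h0
    exact hu t ht
  · obtain ⟨i, β⟩ := x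
    obtain ⟨i', β'⟩ := y
    rintro ⟨hi, t, ht⟩
    obtain rfl : i = i' := hi
    have ht0 : t ≠ 0 := by
      rintro rfl
      simp at ht
    refine le_antisymm (codeWord_smul ω γ i ht) (codeWord_smul ω γ i (t := t⁻¹) ?_)
    rw [ht, ← mul_assoc, ← map_mul, inv_mul_cancel₀ ht0, map_one, one_mul]

/-- Distinct codewords meet in dimension at most one. -/
lemma finrank_inf_le (S : CodeSetup Fq k L ω γ) {x y : CodeIdx Fm (Fintype.card Fq) L × Fnˣ}
    (hne : codeWord Fq ω γ x ≠ codeWord Fq ω γ y) :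
    finrank Fq ↥(codeWord Fq ω γ x ⊓ codeWord Fq ω γ y) ≤ 1 := by
  by_cases hbot : codeWord Fq ω γ x ⊓ codeWord Fq ω γ y = ⊥
  · rw [hbot]; simp
  obtain ⟨w, hw, hw0⟩ := Submodule.exists_mem_ne_zero_of_ne_bot hbot
  refine finrank_le_one (⟨w, hw⟩ : ↥(codeWord Fq ω γ x ⊓ codeWord Fq ω γ y)) ?_
  rintro ⟨z, hz⟩
  obtain ⟨u1, hu1⟩ := mem_codeWord.1 hw.1
  obtain ⟨v1, hv1⟩ := mem_codeWord.1 hw.2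
  obtain ⟨u2, hu2⟩ := mem_codeWord.1 hz.1
  obtain ⟨v2, hv2⟩ := mem_codeWord.1 hz.2
  have hu0 : u1 ≠ 0 := by
    rintro rfl
    rw [map_zero, mul_zero] at hu1
    exact hw0 hu1.symm
  have hD : u1 * u2 ^ Fintype.card Fq - u2 * u1 ^ Fintype.card Fq = 0 := by
    by_contra hD
    exact hne ((S.codeWord_eq_iff x y).2
      (S.rigid_idx hu0 hD (hu1.trans hv1.symm) (hu2.trans hv2.symm)))
  -- A vanishing Moore determinant makes `u₂ / u₁` a fixed point of Frobenius.
  have hfix : (u2 / u1) ^ Fintype.card Fq = u2 / u1 := by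
    rw [div_pow, div_eq_div_iff (pow_ne_zero _ hu0) hu0]
    linear_combination hD
  obtain ⟨t, ht⟩ := mem_base_of_pow_card hfix
  refine ⟨t, Subtype.ext ?_⟩
  have hu21 : u2 = t • u1 := by rw [Algebra.smul_def, ht]; field_simp
  simp only [SetLike.mk_smul_mk]
  rw [← hu1, ← hu2, hu21, map_smul, mul_smul_comm]

lemma sdist_codeWord [Module.Finite Fq Fn] (S : CodeSetup Fq k L ω γ)
    (x y : CodeIdx Fm (Fintype.card Fq) L × Fnˣ) :
    sdist (codeWord Fq ω γ x) (codeWord Fq ω γ y)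
      = 2 * k - 2 * finrank Fq ↥(codeWord Fq ω γ x ⊓ codeWord Fq ω γ y) := by
  have h := Submodule.finrank_sup_add_finrank_inf_eq (codeWord Fq ω γ x) (codeWord Fq ω γ y)
  rw [S.finrank_codeWord, S.finrank_codeWord] at h
  unfold sdist
  omega

lemma minDist_range [Module.Finite Fq Fn] (S : CodeSetup Fq k L ω γ) (hL : 0 < L) :
    minDist (Set.range (codeWord Fq ω γ (L := L))) = 2 * k - 2 := by
  have hq : 1 < Fintype.card Fq := Fintype.one_lt_card
  obtain ⟨u, hu⟩ := S.exists_not_base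
  have hu0 : u ≠ 0 := by
    rintro rfl
    exact hu 0 (map_zero _)
  let i : CodeIdx Fm (Fintype.card Fq) L := ⟨⟨0, hL⟩, 0, 0, ⟨0, by omega⟩⟩
  have hinj := S.idxMap_injective i
  have h1 : idxMap Fq ω γ i 1 ≠ 0 := by
    rw [Ne, map_eq_zero_iff _ hinj]; exact one_ne_zero
  have h2 : idxMap Fq ω γ i u ≠ 0 := by
    rwa [Ne, map_eq_zero_iff _ hinj]
  -- With `v₁, v₂ ∈ V` independent, `v₂ V` and `v₁ V` are distinct and share `v₁ v₂`.
  have hne : codeWord Fq ω γ (i, Units.mk0 _ h2) ≠ codeWord Fq ω γ (i, Units.mk0 _ h1) := by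
    intro h
    obtain ⟨-, t, ht⟩ := (S.codeWord_eq_iff _ _).1 h
    simp only [Units.val_mk0] at ht
    rw [← Algebra.smul_def, ← map_smul] at ht
    refine hu t ?_
    rw [hinj ht, Algebra.algebraMap_eq_smul_one]
  have hmem : 2 * k - 2 ∈ {d : ℕ | ∃ U ∈ Set.range (codeWord Fq ω γ (L := L)),
      ∃ W ∈ Set.range (codeWord Fq ω γ (L := L)), U ≠ W ∧ d = sdist U W} := by
    refine ⟨_, ⟨_, rfl⟩, _, ⟨_, rfl⟩, hne, ?_⟩
    have hle := S.finrank_inf_le hne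
    have hpos : 0 < finrank Fq ↥(codeWord Fq ω γ (i, Units.mk0 _ h2) ⊓
        codeWord Fq ω γ (i, Units.mk0 _ h1)) := by
      rw [Nat.pos_iff_ne_zero, Ne, Submodule.finrank_eq_zero]
      intro hb
      have : idxMap Fq ω γ i u * idxMap Fq ω γ i 1 ∈ codeWord Fq ω γ (i, Units.mk0 _ h2) ⊓
          codeWord Fq ω γ (i, Units.mk0 _ h1) :=
        ⟨mem_codeWord.2 ⟨1, rfl⟩, mem_codeWord.2 ⟨u, mul_comm _ _⟩⟩
      rw [hb, Submodule.mem_bot] at this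
      exact mul_ne_zero h2 h1 this
    rw [S.sdist_codeWord]
    omega
  refine le_antisymm (Nat.sInf_le hmem) (le_csInf ⟨_, hmem⟩ ?_)
  rintro d ⟨_, ⟨x, rfl⟩, _, ⟨y, rfl⟩, hxy, rfl⟩
  have := S.finrank_inf_le hxy
  rw [S.sdist_codeWord]
  omega

end CodeSetup

/-! ### Counting -/

lemma card_codeIdx [Finite Fm] (q L : ℕ) :
    Nat.card (CodeIdx Fm q L)
      = (∑ l ∈ Finset.range L, Nat.card Fm ^ l) * (Nat.card Fm * (q - 1)) := by
  have hdeg : ∀ l : ℕ, Nat.card (degreeLT Fm l) = Nat.card Fm ^ l := fun l => by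
    rw [Nat.card_congr (degreeLTEquiv Fm l).toEquiv, Nat.card_fun]; simp
  have : ∀ l : ℕ, Finite (degreeLT Fm l) := fun l =>
    Finite.of_equiv _ (degreeLTEquiv Fm l).symm.toEquiv
  rw [CodeIdx, Nat.card_sigma, Finset.sum_mul, ← Fin.sum_univ_eq_sum_range
    (fun l => Nat.card Fm ^ l * (Nat.card Fm * (q - 1)))]
  simp [Nat.card_prod, hdeg]

/-- Every fibre of `(i, β) ↦ β V_i` is a coset of `F_q^*`. -/
lemma CodeSetup.ncard_range [Finite Fn] {k L : ℕ} {ω : Fm} {γ : Fn} (S : CodeSetup Fq k L ω γ) :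
    (Set.range (codeWord Fq ω γ (L := L))).ncard * (Fintype.card Fq - 1)
      = Nat.card (CodeIdx Fm (Fintype.card Fq) L) * (Nat.card Fn - 1) := by
  classical
  have := S.finite_mid
  have : ∀ l : ℕ, Finite (degreeLT Fm l) := fun l =>
    Finite.of_equiv _ (degreeLTEquiv Fm l).symm.toEquiv
  have := Fintype.ofFinite (CodeIdx Fm (Fintype.card Fq) L)
  have := Fintype.ofFinite Fnˣ
  have hfib : ∀ W ∈ Finset.univ.image (codeWord Fq ω γ (L := L)),
      (Finset.univ.filter fun x => codeWord Fq ω γ (L := L) x = W).card = Fintype.card Fq - 1 := by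
    intro W hW
    obtain ⟨y, -, rfl⟩ := Finset.mem_image.1 hW
    have himg : (Finset.univ.filter fun x => codeWord Fq ω γ (L := L) x = codeWord Fq ω γ y)
        = Finset.univ.image
          (fun t : Fqˣ => (y.1, Units.map (algebraMap Fq Fn).toMonoidHom t * y.2)) := by
      ext x
      simp only [Finset.mem_filter, Finset.mem_univ, true_and, Finset.mem_image]
      rw [S.codeWord_eq_iff]
      constructor
      · rintro ⟨hi, t, ht⟩
        have ht0 : t ≠ 0 := by
          rintro rfl
          simp at ht
        exact ⟨Units.mk0 t ht0, Prod.ext hi.symm (Units.ext (by simp [ht]))⟩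
      · rintro ⟨t, rfl⟩
        exact ⟨rfl, t, by simp⟩
    rw [himg, Finset.card_image_of_injective, Finset.card_univ, Fintype.card_units]
    intro t t' h
    have h2 := mul_right_cancel (Prod.ext_iff.1 h).2
    exact Units.map_injective (algebraMap Fq Fn).injective h2
  have hsum := Finset.card_eq_sum_card_image (codeWord Fq ω γ (L := L)) Finset.univ
  rw [Finset.sum_congr rfl hfib, Finset.sum_const, smul_eq_mul, Finset.card_univ,
    Fintype.card_prod, ← Nat.card_eq_fintype_card, ← Nat.card_eq_fintype_card (α := Fnˣ),
    Nat.card_units] at hsum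
  rw [hsum, ← Set.ncard_coe_finset, Finset.coe_image, Finset.coe_univ, Set.image_univ]

/-! ### Matching the two descriptions of the parameters -/

lemma exists_idx (ω : Fm) (γ : Fn) {L l0 l1 j : ℕ} {α : ℕ → Fm} {a : Fm}
    (hj : j < Fintype.card Fq - 1) (h01 : l0 ≤ l1) (h1 : l1 < L) {Φ : Fm →ₗ[Fq] Fn}
    (hΦ : ∀ u : Fm, Φ u = algebraMap Fm Fn u *
            (1 + ∑ t ∈ Finset.Icc 1 l0, algebraMap Fm Fn (α t) * γ ^ t)
          + algebraMap Fm Fn (ω ^ j * (u ^ Fintype.card Fq + a * u)) * γ ^ (l1 + 1)) :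
    ∃ i : CodeIdx Fm (Fintype.card Fq) L, Φ = idxMap Fq ω γ i := by
  have hR : (∑ t ∈ Finset.Icc 1 l0, C (α t) * X ^ (t - 1) : Fm[X]) ∈ degreeLT Fm l1 := by
    refine Submodule.sum_mem _ fun t ht => ?_
    rw [Finset.mem_Icc] at ht
    rw [mem_degreeLT]
    refine (degree_C_mul_X_pow_le _ _).trans_lt ?_
    exact_mod_cast (by omega : t - 1 < l1)
  refine ⟨⟨⟨l1, h1⟩, ⟨_, hR⟩, a, ⟨j, hj⟩⟩, LinearMap.ext fun u => ?_⟩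
  rw [hΦ, idxMap, codeMap_apply]
  have hsum : aeval γ (X * ∑ t ∈ Finset.Icc 1 l0, C (α t) * X ^ (t - 1) : Fm[X])
      = ∑ t ∈ Finset.Icc 1 l0, algebraMap Fm Fn (α t) * γ ^ t := by
    rw [Finset.mul_sum, map_sum]
    refine Finset.sum_congr rfl fun t ht => ?_
    rw [Finset.mem_Icc] at ht
    obtain ⟨s, rfl⟩ : ∃ s, t = s + 1 := ⟨t - 1, by omega⟩
    simp only [map_mul, map_pow, aeval_X, aeval_C, Nat.add_sub_cancel]
    ring
  simp only [codePoly, CodeIdx.poly, map_add, map_one, aeval_C, map_mul (aeval γ) (C _),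
    map_pow (aeval γ) X, aeval_X, hsum]

lemma idxMap_formula (ω : Fm) (γ : Fn) {L : ℕ} (i : CodeIdx Fm (Fintype.card Fq) L) (u : Fm) :
    idxMap Fq ω γ i u = algebraMap Fm Fn u *
            (1 + ∑ t ∈ Finset.Icc 1 i.poly.natDegree, algebraMap Fm Fn (i.poly.coeff t) * γ ^ t)
          + algebraMap Fm Fn (ω ^ (i.2.2.2 : ℕ) * (u ^ Fintype.card Fq + i.2.2.1 * u))
            * γ ^ ((i.1 : ℕ) + 1) := by
  have hsum : aeval γ i.poly
      = 1 + ∑ t ∈ Finset.Icc 1 i.poly.natDegree, algebraMap Fm Fn (i.poly.coeff t) * γ ^ t := by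
    rw [aeval_eq_sum_range, Finset.range_eq_Ico, Finset.sum_eq_sum_Ico_succ_bot (by omega),
      i.coeff_poly]
    simp only [Algebra.smul_def, map_one, pow_zero, mul_one]
    rfl
  rw [idxMap, codeMap_apply, codePoly, map_add, map_mul, map_mul, aeval_C, aeval_C, hsum,
    map_pow, aeval_X]

/-- Since `γ` generates `F_{q^n}` over `F_{q^k}`, its minimal polynomial has degree
`[F_{q^n} : F_{q^k}]`. -/
lemma eq_zero_of_aeval [Module.Finite Fm Fn] {γ : Fn}
    (hγ : Algebra.adjoin Fm ({γ} : Set Fn) = ⊤) {r : Fm[X]} (hr : r.natDegree < finrank Fm Fn)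
    (h : aeval γ r = 0) : r = 0 := by
  by_contra h0
  have h1 := (Field.primitive_element_iff_minpoly_natDegree_eq Fm γ).1
    (IntermediateField.adjoin_eq_top_of_algebra Fm _ hγ)
  have h2 := natDegree_le_natDegree (minpoly.degree_le_of_ne_zero Fm γ h0 h)
  omega

end CodeProof

/-- The construction of Zhang et al. in `G_q(pk,k)`, `p` an odd prime:
with `ℓ = (p-3)/2`, the union `C` of the orbits of the subspaces
`V = {u·(1+α₁γ+⋯+α_{ℓ₀}γ^{ℓ₀}) + ω^j (u^q + a u) γ^{ℓ₁+1} : u ∈ F_{q^k}}` is a cyclic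
subspace code with `|C| = q^k (q^{(ℓ+1)k}-1)(q^{pk}-1)/(q^k-1)` and minimum distance `2k-2`;
moreover each such `V` is in `G_q(pk,k)`. -/
theorem statement7
    {Fq Fm Fn : Type*} [Field Fq] [Field Fm] [Field Fn] [Fintype Fq]
    [Algebra Fq Fm] [Algebra Fq Fn] [Algebra Fm Fn] [IsScalarTower Fq Fm Fn]
    (q k p : ℕ) (hq : Fintype.card Fq = q) (hk : 2 ≤ k)
    (hp : p.Prime) (hodd : Odd p)
    (hdm : finrank Fq Fm = k) (hdn : finrank Fq Fn = p * k)
    (ω : Fm) (hω : ∀ x : Fm, x ≠ 0 → ∃ i : ℕ, ω ^ i = x)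
    (γ : Fn) (hγ : Algebra.adjoin Fm ({γ} : Set Fn) = ⊤)
    (C : Set (Submodule Fq Fn))
    (hC : C = {X | ∃ (l0 : ℕ) (α : ℕ → Fm) (a : Fm) (j l1 : ℕ),
      l0 ≤ (p - 3) / 2 ∧ (1 ≤ l0 → α l0 ≠ 0) ∧ j ≤ q - 2 ∧
      l0 ≤ l1 ∧ l1 ≤ (p - 3) / 2 ∧
      ∃ Φ : Fm →ₗ[Fq] Fn,
        (∀ u : Fm, Φ u = algebraMap Fm Fn u *
            (1 + ∑ t ∈ Finset.Icc 1 l0, algebraMap Fm Fn (α t) * γ ^ t)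
          + algebraMap Fm Fn (ω ^ j * (u ^ q + a * u)) * γ ^ (l1 + 1)) ∧
        X ∈ orb (LinearMap.range Φ)}) :
    (∀ (l0 : ℕ) (α : ℕ → Fm) (a : Fm) (j l1 : ℕ),
      l0 ≤ (p - 3) / 2 → (1 ≤ l0 → α l0 ≠ 0) → j ≤ q - 2 →
      l0 ≤ l1 → l1 ≤ (p - 3) / 2 →
      ∀ Φ : Fm →ₗ[Fq] Fn,
        (∀ u : Fm, Φ u = algebraMap Fm Fn u *
            (1 + ∑ t ∈ Finset.Icc 1 l0, algebraMap Fm Fn (α t) * γ ^ t)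
          + algebraMap Fm Fn (ω ^ j * (u ^ q + a * u)) * γ ^ (l1 + 1)) →
        finrank Fq ↥(LinearMap.range Φ) = k) ∧
    C.ncard = q ^ k * (q ^ (((p - 3) / 2 + 1) * k) - 1) *
      ((q ^ (p * k) - 1) / (q ^ k - 1)) ∧
    minDist C = 2 * k - 2 := by
  subst hq
  have hq2 : 1 < Fintype.card Fq := Fintype.one_lt_card
  obtain ⟨ℓ, rfl⟩ : ∃ ℓ, p = 2 * ℓ + 3 := by
    obtain ⟨s, rfl⟩ := hodd
    have := hp.two_le
    exact ⟨s - 1, by omega⟩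
  have hℓ : (2 * ℓ + 3 - 3) / 2 = ℓ := by omega
  rw [hℓ] at hC ⊢
  have hfinm : Module.Finite Fq Fm := Module.finite_of_finrank_pos (by omega)
  have hfinn : Module.Finite Fq Fn := Module.finite_of_finrank_pos (by
    rw [hdn]; exact Nat.mul_pos (by omega) (by omega))
  have hfinmn : Module.Finite Fm Fn := Module.Finite.of_restrictScalars_finite Fq Fm Fn
  have : Finite Fn := Module.finite_of_finite Fq
  have : Finite Fm := Module.finite_of_finite Fq
  have hrel : finrank Fm Fn = 2 * ℓ + 3 := by
    have h := Module.finrank_mul_finrank Fq Fm Fn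
    rw [hdm, hdn, mul_comm] at h
    exact Nat.eq_of_mul_eq_mul_right (by omega) h
  have hcardm : Nat.card Fm = Fintype.card Fq ^ k := by
    rw [← hdm, Module.natCard_eq_pow_finrank (K := Fq), Nat.card_eq_fintype_card]
  have hcardn : Nat.card Fn = Fintype.card Fq ^ ((2 * ℓ + 3) * k) := by
    rw [← hdn, Module.natCard_eq_pow_finrank (K := Fq), Nat.card_eq_fintype_card]
  have S : CodeSetup Fq k (ℓ + 1) ω γ :=
    { two_le := hk
      finrank_eq := hdm
      prim := hω
      ne_zero := primitive_ne_zero Fq hω (by omega)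
      inj := fun r hr h => eq_zero_of_aeval hγ (by omega) h }
  have hCr : C = Set.range (codeWord Fq ω γ (L := ℓ + 1)) := by
    rw [hC]
    ext W
    constructor
    · rintro ⟨l0, α, a, j, l1, -, -, hj, h01, h1, Φ, hΦ, β, rfl⟩
      obtain ⟨i, rfl⟩ := exists_idx (L := ℓ + 1) ω γ (by omega) h01 (by omega) hΦ
      exact ⟨(i, β), rfl⟩
    · rintro ⟨⟨i, β⟩, rfl⟩
      have h1 := i.1.2
      have h2 := i.2.2.2.2
      have h3 := i.natDegree_poly
      refine ⟨i.poly.natDegree, i.poly.coeff, i.2.2.1, i.2.2.2, i.1, by omega, fun h => ?_,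
        by omega, h3, by omega, idxMap Fq ω γ i, idxMap_formula ω γ i, β, rfl⟩
      rw [Polynomial.coeff_natDegree, Polynomial.leadingCoeff_ne_zero]
      rintro h0
      simp [h0] at h
  refine ⟨?_, ?_, ?_⟩
  · intro l0 α a j l1 _ _ hj h01 h1 Φ hΦ
    obtain ⟨i, rfl⟩ := exists_idx (L := ℓ + 1) ω γ (by omega) h01 (by omega) hΦ
    rw [LinearMap.finrank_range_of_inj (S.idxMap_injective i), hdm]
  · have hcount := S.ncard_range
    rw [← hCr, card_codeIdx, hcardm, hcardn] at hcount
    set q := Fintype.card Fq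
    have hQ : 1 < q ^ k := Nat.one_lt_pow (by omega) hq2
    have hgeom : (∑ l ∈ Finset.range (ℓ + 1), (q ^ k) ^ l) * (q ^ k - 1)
        = q ^ ((ℓ + 1) * k) - 1 := by
      rw [Nat.geomSum_eq (by omega), mul_comm (ℓ + 1) k, pow_mul]
      exact Nat.div_mul_cancel (by simpa using Nat.sub_dvd_pow_sub_pow (q ^ k) 1 (ℓ + 1))
    obtain ⟨N, hN⟩ : q ^ k - 1 ∣ q ^ ((2 * ℓ + 3) * k) - 1 := by
      rw [mul_comm _ k, pow_mul]
      simpa using Nat.sub_dvd_pow_sub_pow (q ^ k) 1 (2 * ℓ + 3)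
    rw [hN] at hcount ⊢
    rw [Nat.mul_div_cancel_left _ (by omega), ← hgeom]
    apply Nat.eq_of_mul_eq_mul_right (by omega : 0 < q - 1)
    rw [hcount]
    ring
  · rw [hCr]
    exact S.minDist_range (by omega)
end
end

section
/- Let q be a prime power, k ≥ 2, p an odd prime, e ≥ 1, n = p^e·k, and ℓ = (p−3)/2. For 1 ≤ i ≤ e write K_i = F_{q^{p^{i−1}k}}, let ω_i be a primitive element of K_i, and let γ_i ∈ F_{q^{p^i k}} satisfy K_i(γ_i) = F_{q^{p^i k}}. For an index h = (α, a, j, ℓ₁) with 0 ≤ ℓ₀ ≤ ℓ, α = (α₁,…,α_{ℓ₀}) ∈ K_i^{ℓ₀} with α_{ℓ₀} ≠ 0 when ℓ₀ ≥ 1, a ∈ K_i, 0 ≤ j ≤ q−2, and ℓ₀ ≤ ℓ₁ ≤ ℓ, let Φ_{i,h}: K_i → F_{q^{p^i k}} be the injective F_q-linear map u ↦ u·(1 + α₁γ_i + ⋯ + α_{ℓ₀}γ_i^{ℓ₀}) + ω_i^j·(u^q + a·u)·γ_i^{ℓ₁+1}. Let C ⊆ G_q(n,k) be the set of all subspaces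 (β_e·Φ_{e,h_e}) ∘ ⋯ ∘ (β₁·Φ_{1,h₁})(F_{q^k}), where β_i ∈ F_{q^{p^i k}}* and each h_i ranges over all admissible indices at level i. Then C is a cyclic subspace code with minimum distance 2k − 2 and cardinality |C| = ∏_{i=1}^{e} q^{p^{i−1}k}·(q^{(ℓ+1)p^{i−1}k}−1)·(q^{p^i k}−1)/(q^{p^{i−1}k}−1). -/
/-!
Write `K ⊂ L` for two consecutive fields of the tower, so that `[L : K] = p` and `1, γ, …, γ^{p-1}`
is a `K`-basis of `L`. The heart of the matter is that the images of the maps `Φ_h` are rigid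
(`phi_rigidity`): if `β·Φ_h(uᵢ) = Φ_{h'}(vᵢ)` for `i = 1, 2` with `u₁, u₂` linearly independent
over `F_q`, then `h = h'` and `β ∈ F_q`. Eliminating `β` gives
`Φ_h(u₁)·Φ_{h'}(v₂) = Φ_h(u₂)·Φ_{h'}(v₁)`, a relation of degree at most `2(ℓ+1) = p - 1` in `γ`,
hence an identity of polynomials over `K`. Its constant term is `u₁v₂ = u₂v₁`. Dividing by it and
comparing coefficients (`poly_rigidity`) yields equal `ℓ₁`, equal `α` and
`ω^j(uᵢ^{q-1} + a) = ω^{j'}(vᵢ^{q-1} + a')`. Hence `ω^j·u₁^{q-1} = ω^{j'}·v₁^{q-1}`, which forces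
`j = j'` since `ω` is primitive (`primitive_coset`), then `v₁/u₁ ∈ F_q` and `a = a'`.

Consequently `β·Φ_h(U)` and `β'·Φ_{h'}(W)` meet in dimension at most one unless `h = h'` and
`β/β' ∈ F_q^*`, in which case the intersection is isomorphic to `U ∩ W` (`step_unique`,
`step_inter`). By induction on the level, distinct codewords meet in dimension at most one. The
same fact shows that a codeword determines `W`, `h` and the class of `β` modulo `F_q^*`, which gives
the cardinality (`step_card`, `card_idx`), and that orbits have full length, so that the bound
`2k - 2` is attained by some `X` and `(y/x)·X` with `x, y ∈ X` (`minDist_eq`).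
-/

open Module Submodule Filter

noncomputable section

/-! ### Polynomial and finite-field preliminaries -/

open Polynomial in
/-- Write `A_r = 1 + X·B + r·X^{l+1}` and `A'_s = 1 + X·B' + s·X^{l'+1}`. An identity
`A_{r₁}·A'_{s₂} = A_{r₂}·A'_{s₁}` with `r₁ ≠ r₂`, `s₁ ≠ s₂` forces the two families to coincide:
after cancelling `(1 + X·B)(1 + X·B')`, the lowest coefficient gives `l = l'`, the coefficients
below `X^{l+1}` give `B = B'`, and the top one gives `r₁s₂ = r₂s₁`. -/
lemma poly_rigidity {K : Type*} [Field K] {l l' : ℕ} {B B' : K[X]}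
    (hB : B.degree < l) (hB' : B'.degree < l') {r₁ r₂ s₁ s₂ : K} (hr : r₁ ≠ r₂) (hs : s₁ ≠ s₂)
    (h : (1 + X * B + C r₁ * X ^ (l + 1)) * (1 + X * B' + C s₂ * X ^ (l' + 1)) =
      (1 + X * B + C r₂ * X ^ (l + 1)) * (1 + X * B' + C s₁ * X ^ (l' + 1))) :
    l = l' ∧ B = B' ∧ r₁ = s₁ ∧ r₂ = s₂ := by
  have key : X ^ (l + 1) * (C (r₁ - r₂) * (1 + X * B')) + X ^ (l' + 1) *
      (C (s₂ - s₁) * (1 + X * B)) + X ^ (l + 1) * X ^ (l' + 1) * C (r₁ * s₂ - r₂ * s₁) = 0 := by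
    simp only [C_sub, C_mul]
    linear_combination h
  have hll : l = l' := by
    rcases lt_trichotomy l l' with hlt | heq | hlt
    · exfalso
      obtain ⟨d, rfl⟩ := Nat.exists_eq_add_of_lt hlt
      have : X ^ (l + 1) * (C (r₁ - r₂) * (1 + X * B') + X * (X ^ d *
          (C (s₂ - s₁) * (1 + X * B)) + X ^ d * X ^ (l + 1) * C (r₁ * s₂ - r₂ * s₁))) = 0 := by
        rw [← key]; ring
      have h0 := (mul_eq_zero.mp this).resolve_left (pow_ne_zero _ X_ne_zero)
      have := congrArg (eval 0) h0
      simp [sub_eq_zero, hr] at this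
    · exact heq
    · exfalso
      obtain ⟨d, rfl⟩ := Nat.exists_eq_add_of_lt hlt
      have : X ^ (l' + 1) * (C (s₂ - s₁) * (1 + X * B) + X * (X ^ d *
          (C (r₁ - r₂) * (1 + X * B')) + X ^ d * X ^ (l' + 1) * C (r₁ * s₂ - r₂ * s₁))) = 0 := by
        rw [← key]; ring
      have h0 := (mul_eq_zero.mp this).resolve_left (pow_ne_zero _ X_ne_zero)
      have := congrArg (eval 0) h0
      simp [sub_eq_zero, hs.symm] at this
  subst hll
  have key2 : X ^ (l + 1) * (C (r₁ - r₂) * (1 + X * B') +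
      C (s₂ - s₁) * (1 + X * B) + X ^ (l + 1) * C (r₁ * s₂ - r₂ * s₁)) = 0 := by
    rw [← key]; ring
  have h0 := (mul_eq_zero.mp key2).resolve_left (pow_ne_zero _ X_ne_zero)
  have hd : (r₁ - r₂) + (s₂ - s₁) = 0 := by
    have := congrArg (eval 0) h0
    simpa using this
  have hcB : B.coeff l = 0 := coeff_eq_zero_of_degree_lt hB
  have hcB' : B'.coeff l = 0 := coeff_eq_zero_of_degree_lt hB'
  have he : r₁ * s₂ - r₂ * s₁ = 0 := by
    have := congrArg (fun f => coeff f (l + 1)) h0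
    simpa [mul_add, coeff_C_mul, coeff_X_mul, hcB, hcB', coeff_one, coeff_C, coeff_X_pow,
      coeff_X_pow_mul', -map_sub] using this
  have hr' : r₁ - r₂ ≠ 0 := sub_ne_zero.mpr hr
  have hBB : B = B' := by
    have hs2 : s₂ - s₁ = -(r₁ - r₂) := by linear_combination hd
    rw [he, hs2] at h0
    have : (C (r₁ - r₂) * X) * (B - B') = 0 := by
      simp only [C_neg, C_0] at h0
      linear_combination -h0
    have := (mul_eq_zero.mp this).resolve_left (mul_ne_zero (C_ne_zero.mpr hr') X_ne_zero)
    exact sub_eq_zero.mp this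
  have h1 : r₁ = s₁ := by
    have : (r₁ - r₂) * (r₁ - s₁) = 0 := by linear_combination r₁ * hd - he
    exact sub_eq_zero.mp ((mul_eq_zero.mp this).resolve_left hr')
  exact ⟨rfl, hBB, h1, by linear_combination h1 - hd⟩

open Polynomial in
/-- Elements fixed by the `q`-Frobenius lie in `F_q`. -/
lemma mem_base_of_pow_eq {Fq K : Type*} [Field Fq] [Fintype Fq] [Field K] [Algebra Fq K]
    {x : K} (hx : x ^ (Fintype.card Fq - 1) = 1) : ∃ c : Fq, algebraMap Fq K c = x := by
  have hx' : x ^ Fintype.card Fq = x := by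
    obtain ⟨m, hm⟩ := Nat.exists_eq_add_of_le' (Fintype.card_pos (α := Fq))
    rw [hm] at hx ⊢
    simp only [Nat.succ_eq_add_one, zero_add, Nat.add_sub_cancel] at hx
    rw [pow_add, pow_one]
    simp [hx]
  classical
  have hne : (X ^ Fintype.card Fq - X : K[X]) ≠ 0 :=
    FiniteField.X_pow_card_sub_X_ne_zero K Fintype.one_lt_card
  -- The images of the `q` elements of `F_q` exhaust the roots of `X^q - X`.
  have heq : Finset.univ.image (algebraMap Fq K) =
      (X ^ Fintype.card Fq - X : K[X]).roots.toFinset := by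
    apply Finset.eq_of_subset_of_card_le
    · intro y hy
      obtain ⟨c, -, rfl⟩ := Finset.mem_image.mp hy
      simp [hne, ← map_pow, FiniteField.pow_card]
    · rw [Finset.card_image_of_injective _ (algebraMap Fq K).injective, Finset.card_univ]
      exact (Multiset.toFinset_card_le _).trans ((card_roots' _).trans_eq
        (FiniteField.X_pow_card_sub_X_natDegree_eq K Fintype.one_lt_card))
  have hmem : x ∈ (X ^ Fintype.card Fq - X : K[X]).roots.toFinset := by
    simp [hne, hx']
  rw [← heq] at hmem
  obtain ⟨c, -, hc⟩ := Finset.mem_image.mp hmem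
  exact ⟨c, hc⟩

/-- If `ω` generates `Kˣ`, the powers `ω^j`, `j < q-1`, are pairwise inequivalent modulo
`(q-1)`-st powers. -/
lemma primitive_coset {Fq K : Type*} [Field Fq] [Fintype Fq] [Field K] [Algebra Fq K]
    [FiniteDimensional Fq K] (ω : K) (hω0 : ω ≠ 0) (hω : ∀ x : K, x ≠ 0 → ∃ j : ℕ, ω ^ j = x)
    {j j' : ℕ} (hj : j < Fintype.card Fq - 1) (hj' : j' < Fintype.card Fq - 1) {u v : K}
    (hu : u ≠ 0) (hv : v ≠ 0)
    (h : ω ^ j * u ^ (Fintype.card Fq - 1) = ω ^ j' * v ^ (Fintype.card Fq - 1)) : j = j' := by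
  have : Finite K := Module.finite_of_finite Fq
  have := Fintype.ofFinite K
  have hcard : Fintype.card K = Fintype.card Fq ^ finrank Fq K := Module.card_eq_pow_finrank
  obtain ⟨N, hN⟩ : Fintype.card Fq - 1 ∣ Fintype.card K - 1 := by
    rw [hcard]; exact Nat.sub_one_dvd_pow_sub_one _ _
  have hK : 1 < Fintype.card K := Fintype.one_lt_card
  have hNpos : 0 < N := by
    rcases Nat.eq_zero_or_pos N with h0 | h0
    · subst h0; omega
    · exact h0
  have hpow : ω ^ (j * N) = ω ^ (j' * N) := by
    have := congrArg (· ^ N) h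
    simp only [mul_pow, ← pow_mul, ← hN, FiniteField.pow_card_sub_one_eq_one u hu,
      FiniteField.pow_card_sub_one_eq_one v hv, mul_one] at this
    exact this
  have hord : orderOf ω = Fintype.card K - 1 := by
    have h1 : orderOf (Units.mk0 ω hω0) = Nat.card Kˣ := by
      apply orderOf_eq_card_of_forall_mem_powers
      intro x
      obtain ⟨m, hm⟩ := hω x x.ne_zero
      exact ⟨m, Units.ext (by simpa using hm)⟩
    rw [← orderOf_units, Units.val_mk0, Nat.card_units, Nat.card_eq_fintype_card] at h1
    exact h1
  have hinj := pow_injOn_Iio_orderOf (x := ω) (x₁ := j * N) (x₂ := j' * N)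
    (by rw [hord, hN]; exact Nat.mul_lt_mul_of_pos_right hj hNpos)
    (by rw [hord, hN]; exact Nat.mul_lt_mul_of_pos_right hj' hNpos) hpow
  exact Nat.eq_of_mul_eq_mul_right hNpos hinj

/-! ### The maps `Φ_h` and their rigidity -/

/-- Normalised indices `h = (α, a, j, ℓ₁)` of the maps `Φ_h`. The coefficients `α₁, …, α_{ℓ₀}`
with `ℓ₀ ≤ ℓ₁` are encoded by the polynomial `B` of degree `< ℓ₁` for which
`1 + X·B = 1 + α₁X + ⋯ + α_{ℓ₀}X^{ℓ₀}`; the last two components are `a` and `j`. -/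
abbrev Idx (K : Type*) [Field K] (q ℓ : ℕ) : Type _ :=
  Σ l : Fin (ℓ + 1), (Polynomial.degreeLT K (l : ℕ)) × K × Fin (q - 1)

section Maps

set_option linter.unusedSectionVars false

variable {Fq K L : Type*} [Field Fq] [Fintype Fq] [Field K] [Field L] [Algebra Fq K] [Algebra Fq L]
  [Algebra K L] [IsScalarTower Fq K L] {ℓ : ℕ}

open Polynomial in
/-- `Φ_h(u)` as a polynomial in the generator `γ`. -/
def phiPoly (Fq : Type*) [Fintype Fq] (ω : K) (h : Idx K (Fintype.card Fq) ℓ) (u : K) : K[X] :=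
  C u * (1 + X * (h.2.1 : K[X])) +
    C (ω ^ (h.2.2.2 : ℕ) * (u ^ Fintype.card Fq + h.2.2.1 * u)) * X ^ ((h.1 : ℕ) + 1)

open Polynomial in
/-- The `F_q`-linear map `Φ_h`. -/
def phi (ω : K) (γ : L) (h : Idx K (Fintype.card Fq) ℓ) : K →ₗ[Fq] L where
  toFun u := aeval γ (phiPoly Fq ω h u)
  map_add' u v := by
    have := map_add (FiniteField.frobeniusAlgHom Fq K) u v
    simp only [FiniteField.coe_frobeniusAlgHom] at this
    simp only [phiPoly, this, ← map_add]
    congr 1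
    simp only [map_add, map_mul, mul_add]
    ring
  map_smul' c u := by
    have := map_smul (FiniteField.frobeniusAlgHom Fq K) c u
    simp only [FiniteField.coe_frobeniusAlgHom] at this
    simp only [phiPoly, this, RingHom.id_apply]
    simp only [Algebra.smul_def, IsScalarTower.algebraMap_apply Fq K L, map_add, map_mul, aeval_C]
    ring

open Polynomial in
/-- `γ` satisfies no nontrivial polynomial relation over `K` of degree at most `2(ℓ+1)`. -/
def IsGeneric (K : Type*) {L : Type*} [Field K] [Field L] [Algebra K L] (ℓ : ℕ) (γ : L) : Prop :=
  ∀ f : K[X], f.natDegree ≤ (ℓ + 1) + (ℓ + 1) → aeval γ f = 0 → f = 0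

lemma idx_degree {q : ℕ} (h : Idx K q ℓ) : (h.2.1 : Polynomial K).degree < (h.1 : ℕ) :=
  Polynomial.mem_degreeLT.mp h.2.1.2

open Polynomial in
lemma phiPoly_natDegree (ω : K) (h : Idx K (Fintype.card Fq) ℓ) (u : K) :
    (phiPoly Fq ω h u).natDegree ≤ ℓ + 1 := by
  have hl : (h.1 : ℕ) ≤ ℓ := Nat.lt_succ_iff.mp h.1.2
  have hB : (h.2.1 : K[X]).natDegree ≤ ℓ :=
    (natDegree_le_of_degree_le (idx_degree h).le).trans hl
  unfold phiPoly
  refine natDegree_add_le_of_degree_le ?_ ?_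
  · refine (natDegree_C_mul_le _ _).trans (natDegree_add_le_of_degree_le (by simp) ?_)
    refine natDegree_mul_le.trans ?_
    simp only [natDegree_X]
    omega
  · exact (natDegree_C_mul_X_pow_le _ _).trans (by omega)

open Polynomial in
lemma phiPoly_eval_zero (ω : K) (h : Idx K (Fintype.card Fq) ℓ) (u : K) :
    (phiPoly Fq ω h u).eval 0 = u := by
  simp [phiPoly]

open Polynomial in
/-- The factorisation `Φ_h(u) = u·(A + ω^j(u^{q-1} + a)·γ^{ℓ₁+1})`. -/
lemma phiPoly_factor (ω : K) (h : Idx K (Fintype.card Fq) ℓ) (u : K) :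
    phiPoly Fq ω h u = C u * (1 + X * (h.2.1 : K[X]) +
      C (ω ^ (h.2.2.2 : ℕ) * (u ^ (Fintype.card Fq - 1) + h.2.2.1)) * X ^ ((h.1 : ℕ) + 1)) := by
  have hu : u ^ Fintype.card Fq = u * u ^ (Fintype.card Fq - 1) := by
    rw [← pow_succ', Nat.sub_add_cancel Fintype.card_pos]
  simp only [phiPoly, hu, map_mul, map_add]
  ring

lemma phi_injective {ω : K} {γ : L} (hγ : IsGeneric K ℓ γ) (h : Idx K (Fintype.card Fq) ℓ) :
    Function.Injective (phi (Fq := Fq) ω γ h) := by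
  rw [← LinearMap.ker_eq_bot, LinearMap.ker_eq_bot']
  intro u hu
  have h0 := hγ _ ((phiPoly_natDegree ω h u).trans (by omega)) hu
  rw [← phiPoly_eval_zero ω h u, h0, Polynomial.eval_zero]

open Polynomial in
/-- If two `F_q`-independent elements of the image of `Φ_h` are carried by multiplication by `β`
into the image of `Φ_{h'}`, then `h = h'` and `β ∈ F_q`. -/
lemma phi_rigidity [FiniteDimensional Fq K] {ω : K} {γ : L}
    (hω : ∀ x : K, x ≠ 0 → ∃ j : ℕ, ω ^ j = x)
    (hγ : IsGeneric K ℓ γ) (h h' : Idx K (Fintype.card Fq) ℓ) {β : L} (hβ : β ≠ 0)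
    {u₁ u₂ v₁ v₂ : K} (hu₁ : u₁ ≠ 0) (hu : ∀ c : Fq, c • u₁ ≠ u₂)
    (h₁ : β * phi ω γ h u₁ = phi ω γ h' v₁) (h₂ : β * phi ω γ h u₂ = phi ω γ h' v₂) :
    h = h' ∧ ∃ c : Fq, algebraMap Fq L c = β := by
  have hu₂ : u₂ ≠ 0 := fun h0 => hu 0 (by simp [h0])
  have hphi0 : ∀ u : K, u ≠ 0 → phi (Fq := Fq) ω γ h u ≠ 0 := fun u hu0 h0 =>
    hu0 (phi_injective hγ h (by rw [h0, map_zero]))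
  have hv₁ : v₁ ≠ 0 := by
    rintro rfl
    rw [map_zero] at h₁
    exact mul_ne_zero hβ (hphi0 u₁ hu₁) h₁
  have hv₂ : v₂ ≠ 0 := by
    rintro rfl
    rw [map_zero] at h₂
    exact mul_ne_zero hβ (hphi0 u₂ hu₂) h₂
  have hω0 : ω ≠ 0 := by
    rintro rfl
    obtain ⟨m, hm⟩ := hω (u₂ / u₁) (div_ne_zero hu₂ hu₁)
    rcases Nat.eq_zero_or_pos m with rfl | hm0
    · refine hu 1 ?_
      rw [pow_zero, eq_div_iff hu₁] at hm
      simpa using hm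
    · rw [zero_pow hm0.ne'] at hm
      exact div_ne_zero hu₂ hu₁ hm.symm
  -- Both sides have degree at most `2(ℓ+1)`, so the relation in `L` is one between polynomials.
  have hpoly : phiPoly Fq ω h u₁ * phiPoly Fq ω h' v₂ =
      phiPoly Fq ω h u₂ * phiPoly Fq ω h' v₁ := by
    rw [← sub_eq_zero]
    apply hγ
    · refine (natDegree_sub_le _ _).trans (max_le ?_ ?_) <;>
      exact natDegree_mul_le.trans
        (add_le_add (phiPoly_natDegree _ _ _) (phiPoly_natDegree _ _ _))
    · rw [map_sub, map_mul, map_mul, sub_eq_zero]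
      change phi ω γ h u₁ * phi ω γ h' v₂ = phi ω γ h u₂ * phi ω γ h' v₁
      rw [← h₁, ← h₂]
      ring
  have hconst : u₁ * v₂ = u₂ * v₁ := by
    have := congrArg (eval 0) hpoly
    simpa only [eval_mul, phiPoly_eval_zero] using this
  set n := Fintype.card Fq - 1 with hn
  have hpow_ne : u₁ ^ n ≠ u₂ ^ n := by
    intro heq
    obtain ⟨c, hc⟩ := mem_base_of_pow_eq (Fq := Fq) (x := u₂ / u₁)
      (by rw [← hn, div_pow, heq, div_self (pow_ne_zero _ hu₂)])
    exact hu c (by rw [Algebra.smul_def, hc, div_mul_cancel₀ _ hu₁])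
  have hconst' : u₁ ^ n * v₂ ^ n = u₂ ^ n * v₁ ^ n := by
    rw [← mul_pow, hconst, mul_pow]
  have hpow_ne' : v₁ ^ n ≠ v₂ ^ n := by
    intro heq
    rw [heq] at hconst'
    exact hpow_ne (mul_right_cancel₀ (pow_ne_zero _ hv₂) hconst')
  obtain ⟨l, B, a, j⟩ := h
  obtain ⟨l', B', a', j'⟩ := h'
  have hωj : ∀ m : ℕ, ω ^ m ≠ 0 := fun m => pow_ne_zero m hω0
  rw [phiPoly_factor, phiPoly_factor, phiPoly_factor, phiPoly_factor] at hpoly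
  have hne : (C (u₁ * v₂) : K[X]) ≠ 0 := C_ne_zero.mpr (mul_ne_zero hu₁ hv₂)
  have hcanc := mul_left_cancel₀ hne (b := (1 + X * (B : K[X]) +
      C (ω ^ (j : ℕ) * (u₁ ^ n + a)) * X ^ ((l : ℕ) + 1)) * (1 + X * (B' : K[X]) +
      C (ω ^ (j' : ℕ) * (v₂ ^ n + a')) * X ^ ((l' : ℕ) + 1)))
    (c := (1 + X * (B : K[X]) +
      C (ω ^ (j : ℕ) * (u₂ ^ n + a)) * X ^ ((l : ℕ) + 1)) * (1 + X * (B' : K[X]) +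
      C (ω ^ (j' : ℕ) * (v₁ ^ n + a')) * X ^ ((l' : ℕ) + 1))) (by
      conv_rhs => rw [hconst]
      simp only [C_mul] at hpoly ⊢
      linear_combination hpoly)
  obtain ⟨hl, hB, e₁, e₂⟩ := poly_rigidity (mem_degreeLT.mp B.2) (mem_degreeLT.mp B'.2)
    (fun he => hpow_ne (add_right_cancel (mul_left_cancel₀ (hωj _) he)))
    (fun he => hpow_ne' (add_right_cancel (mul_left_cancel₀ (hωj _) he))) hcanc
  obtain rfl : l = l' := Fin.ext hl
  obtain rfl : B = B' := Subtype.ext hB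
  -- Subtracting the two coefficient identities and using `u₂/u₁ = v₂/v₁` removes `a` and `a'`.
  have hmain : ω ^ (j : ℕ) * u₁ ^ n = ω ^ (j' : ℕ) * v₁ ^ n := by
    have hs : u₁ ^ n - u₂ ^ n ≠ 0 := sub_ne_zero.mpr hpow_ne
    refine mul_right_cancel₀ hs ?_
    linear_combination u₁ ^ n * (e₁ - e₂) - ω ^ (j' : ℕ) * hconst'
  have hj : (j : ℕ) = j' := primitive_coset ω hω0 hω j.2 j'.2 hu₁ hv₁ hmain
  obtain rfl : j = j' := Fin.ext hj
  have huv : u₁ ^ n = v₁ ^ n := mul_left_cancel₀ (hωj _) hmain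
  obtain rfl : a = a' := by
    have := mul_left_cancel₀ (hωj _) e₁
    rw [huv] at this
    exact add_left_cancel this
  refine ⟨rfl, ?_⟩
  obtain ⟨c, hc⟩ := mem_base_of_pow_eq (Fq := Fq) (x := v₁ / u₁)
    (by rw [← hn, div_pow, huv, div_self (pow_ne_zero _ hv₁)])
  have hcv : v₁ = c • u₁ := by rw [Algebra.smul_def, hc, div_mul_cancel₀ _ hu₁]
  refine ⟨c, ?_⟩
  rw [hcv, map_smul, Algebra.smul_def] at h₁
  exact (mul_right_cancel₀ (hphi0 u₁ hu₁) h₁).symm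

/-! ### One level of the construction -/

lemma finrank_map_inj {M N : Type*} [AddCommGroup M] [Module Fq M] [AddCommGroup N] [Module Fq N]
    {f : M →ₗ[Fq] N} (hf : Function.Injective f) (V : Submodule Fq M) :
    finrank Fq (V.map f) = finrank Fq V :=
  (Submodule.equivMapOfInjective f hf V).finrank_eq.symm

lemma mulSub_mul (a b : L) (V : Submodule Fq L) : mulSub a (mulSub b V) = mulSub (a * b) V := by
  simp only [mulSub, ← Submodule.map_comp, LinearMap.mulLeft_mul]

lemma mulSub_injective {a : L} (ha : a ≠ 0) :
    Function.Injective (mulSub (Fq := Fq) a) :=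
  Submodule.map_injective_of_injective (mul_right_injective₀ ha)

lemma mulSub_base (c : Fqˣ) (V : Submodule Fq L) :
    mulSub (algebraMap Fq L (c : Fq)) V = V := by
  ext x
  simp only [mulSub, Submodule.mem_map, LinearMap.mulLeft_apply]
  constructor
  · rintro ⟨v, hv, rfl⟩
    rw [← Algebra.smul_def]
    exact V.smul_mem _ hv
  · intro hx
    refine ⟨(↑c⁻¹ : Fq) • x, V.smul_mem _ hx, ?_⟩
    rw [← Algebra.smul_def, smul_smul, Units.mul_inv, one_smul]

lemma finrank_mulSub_s8 {a : L} (ha : a ≠ 0) (V : Submodule Fq L) :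
    finrank Fq (mulSub a V) = finrank Fq V :=
  finrank_map_inj (mul_right_injective₀ ha) V

/-- One level of the construction: all `β·Φ_h(W)` with `W ∈ S`. -/
def stepCode (ω : K) (γ : L) (ℓ : ℕ) (S : Set (Submodule Fq K)) : Set (Submodule Fq L) :=
  {Y | ∃ W ∈ S, ∃ (β : Lˣ) (h : Idx K (Fintype.card Fq) ℓ),
    Y = mulSub (β : L) (W.map (phi ω γ h))}

/-- Images `β·Φ_h(U)` and `β'·Φ_{h'}(W)` sharing a plane have `h = h'` and `β/β' ∈ F_q^*`,
whatever the subspaces `U` and `W`. -/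
lemma step_unique [FiniteDimensional Fq K] {ω : K} {γ : L}
    (hω : ∀ x : K, x ≠ 0 → ∃ j : ℕ, ω ^ j = x)
    (hγ : IsGeneric K ℓ γ) (h h' : Idx K (Fintype.card Fq) ℓ) (β β' : Lˣ) (U W : Submodule Fq K)
    (hint : 1 < finrank Fq ↥(mulSub (β : L) (U.map (phi ω γ h)) ⊓
      mulSub (β' : L) (W.map (phi ω γ h')))) :
    h = h' ∧ ∃ c : Fqˣ, (β : L) = β' * algebraMap Fq L (c : Fq) := by
  have hne : mulSub (β : L) (U.map (phi ω γ h)) ⊓ mulSub (β' : L) (W.map (phi ω γ h')) ≠ ⊥ := by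
    intro h0
    rw [h0, finrank_bot] at hint
    omega
  obtain ⟨x, hx, hx0⟩ := Submodule.exists_mem_ne_zero_of_ne_bot hne
  obtain ⟨y, hy, hxy⟩ : ∃ y ∈ mulSub (β : L) (U.map (phi ω γ h)) ⊓
      mulSub (β' : L) (W.map (phi ω γ h')), ∀ c : Fq, c • x ≠ y := by
    by_contra hcon
    push Not at hcon
    refine absurd (finrank_le_one (R := Fq) (⟨x, hx⟩ : ↥(mulSub (β : L) (U.map (phi ω γ h)) ⊓
      mulSub (β' : L) (W.map (phi ω γ h')))) ?_) (by omega)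
    rintro ⟨w, hw⟩
    obtain ⟨c, hc⟩ := hcon w hw
    exact ⟨c, Subtype.ext hc⟩
  obtain ⟨⟨_, ⟨u₁, -, rfl⟩, hxu⟩, ⟨_, ⟨v₁, -, rfl⟩, hxv⟩⟩ := hx
  obtain ⟨⟨_, ⟨u₂, -, rfl⟩, hyu⟩, ⟨_, ⟨v₂, -, rfl⟩, hyv⟩⟩ := hy
  rw [LinearMap.mulLeft_apply] at hxu hxv hyu hyv
  obtain ⟨hh, c, hc⟩ := phi_rigidity hω hγ h h' (β := ((β'⁻¹ * β : Lˣ) : L)) (Units.ne_zero _)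
    (u₁ := u₁) (u₂ := u₂) (v₁ := v₁) (v₂ := v₂)
    (by rintro rfl; rw [map_zero, mul_zero] at hxu; exact hx0 hxu.symm)
    (by
      rintro c rfl
      refine hxy c ?_
      rw [← hyu, ← hxu, map_smul, mul_smul_comm])
    (by rw [Units.val_mul, mul_assoc, hxu, ← hxv, Units.inv_mul_cancel_left])
    (by rw [Units.val_mul, mul_assoc, hyu, ← hyv, Units.inv_mul_cancel_left])
  refine ⟨hh, Units.mk0 c ?_, ?_⟩
  · rintro rfl
    rw [map_zero] at hc
    exact Units.ne_zero _ hc.symm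
  · rw [Units.val_mk0, hc, Units.val_mul, Units.mul_inv_cancel_left]

lemma step_finrank {ω : K} {γ : L} (hγ : IsGeneric K ℓ γ) {S : Set (Submodule Fq K)} {k : ℕ}
    (hS : ∀ W ∈ S, finrank Fq W = k) : ∀ Y ∈ stepCode ω γ ℓ S, finrank Fq Y = k := by
  rintro _ ⟨W, hW, β, h, rfl⟩
  rw [finrank_mulSub_s8 β.ne_zero, finrank_map_inj (phi_injective hγ h), hS W hW]

lemma step_cyclic {ω : K} {γ : L} {S : Set (Submodule Fq K)} :
    ∀ Y ∈ stepCode ω γ ℓ S, ∀ u : Lˣ, mulSub (u : L) Y ∈ stepCode ω γ ℓ S := by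
  rintro _ ⟨W, hW, β, h, rfl⟩ u
  exact ⟨W, hW, u * β, h, by rw [mulSub_mul, Units.val_mul]⟩

/-- Codewords sharing a plane coincide; the property passes from one level to the next. -/
lemma step_inter [FiniteDimensional Fq K] {ω : K} {γ : L}
    (hω : ∀ x : K, x ≠ 0 → ∃ j : ℕ, ω ^ j = x)
    (hγ : IsGeneric K ℓ γ) {S : Set (Submodule Fq K)}
    (hS : ∀ U ∈ S, ∀ W ∈ S, 1 < finrank Fq ↥(U ⊓ W) → U = W) :
    ∀ Y ∈ stepCode ω γ ℓ S, ∀ Z ∈ stepCode ω γ ℓ S, 1 < finrank Fq ↥(Y ⊓ Z) → Y = Z := by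
  rintro _ ⟨U, hU, β, h, rfl⟩ _ ⟨W, hW, β', h', rfl⟩ hint
  obtain ⟨rfl, c, hc⟩ := step_unique hω hγ h h' β β' U W hint
  rw [hc, ← mulSub_mul, mulSub_base] at hint ⊢
  have hinf : mulSub (β' : L) (U.map (phi ω γ h)) ⊓ mulSub (β' : L) (W.map (phi ω γ h)) =
      mulSub (β' : L) ((U ⊓ W).map (phi ω γ h)) := by
    rw [Submodule.map_inf _ (phi_injective hγ h)]
    exact (Submodule.map_inf _ (mul_right_injective₀ β'.ne_zero)).symm
  rw [hinf, finrank_mulSub_s8 β'.ne_zero,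
    finrank_map_inj (phi_injective hγ h)] at hint
  rw [hS U hU W hW hint]

/-- Orbits of codewords are of full length. -/
lemma step_stab [FiniteDimensional Fq K] {ω : K} {γ : L}
    (hω : ∀ x : K, x ≠ 0 → ∃ j : ℕ, ω ^ j = x)
    (hγ : IsGeneric K ℓ γ) {S : Set (Submodule Fq K)}
    {Y : Submodule Fq L} (hY : Y ∈ stepCode ω γ ℓ S) (hdim : 1 < finrank Fq Y) (u : Lˣ)
    (hu : mulSub (u : L) Y = Y) : ∃ c : Fqˣ, (u : L) = algebraMap Fq L (c : Fq) := by
  obtain ⟨W, hW, β, h, rfl⟩ := hY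
  rw [mulSub_mul, ← Units.val_mul] at hu
  obtain ⟨-, c, hc⟩ := step_unique hω hγ h h (u * β) β W W (by rwa [hu, inf_idem])
  refine ⟨c, mul_right_cancel₀ β.ne_zero ?_⟩
  rw [← Units.val_mul, hc, mul_comm]

/-- A codeword `β·Φ_h(W)` determines `W`, `h` and the class of `β` modulo `F_q^*`. -/
lemma step_card [FiniteDimensional Fq K] {ω : K} {γ : L}
    (hω : ∀ x : K, x ≠ 0 → ∃ j : ℕ, ω ^ j = x)
    (hγ : IsGeneric K ℓ γ) {S : Set (Submodule Fq K)} (hS : ∀ W ∈ S, 1 < finrank Fq W) :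
    Nat.card (stepCode ω γ ℓ S) * (Fintype.card Fq - 1) =
      Nat.card S * Nat.card (Idx K (Fintype.card Fq) ℓ) * Nat.card Lˣ := by
  let N : Subgroup Lˣ := (Units.map (algebraMap Fq L).toMonoidHom).range
  have hN : Nat.card N = Fintype.card Fq - 1 := by
    rw [← Nat.card_eq_fintype_card, ← Nat.card_units]
    refine (Nat.card_congr (MonoidHom.ofInjective ?_).toEquiv).symm
    exact Units.map_injective (algebraMap Fq L).injective
  let f : S × Idx K (Fintype.card Fq) ℓ × (Lˣ ⧸ N) → stepCode ω γ ℓ S := fun t =>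
    ⟨mulSub ((t.2.2.out : Lˣ) : L) ((t.1 : Submodule Fq K).map (phi ω γ t.2.1)),
      t.1, t.1.2, _, _, rfl⟩
  have hf : Function.Bijective f := by
    constructor
    · rintro ⟨⟨U, hU⟩, h, x⟩ ⟨⟨W, hW⟩, h', y⟩ heq
      have heq' : mulSub ((x.out : Lˣ) : L) (U.map (phi ω γ h)) =
        mulSub ((y.out : Lˣ) : L) (W.map (phi ω γ h')) := congrArg Subtype.val heq
      have hd : finrank Fq (mulSub ((x.out : Lˣ) : L) (U.map (phi ω γ h))) = finrank Fq U := by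
        rw [finrank_mulSub_s8 (Units.ne_zero _),
          finrank_map_inj (phi_injective hγ h)]
      obtain ⟨rfl, c, hc⟩ := step_unique hω hγ h h' x.out y.out U W (by
        rw [← heq', inf_idem, hd]; exact hS U hU)
      have hxy : x = y := by
        rw [← Quotient.out_eq x, ← Quotient.out_eq y]
        refine (QuotientGroup.eq.mpr ?_).symm
        refine ⟨c, Units.ext ?_⟩
        rw [Units.val_mul, hc, Units.inv_mul_cancel_left]
        rfl
      subst hxy
      have := Submodule.map_injective_of_injective (phi_injective hγ h)
        (mulSub_injective (Units.ne_zero _) heq')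
      subst this
      rfl
    · rintro ⟨_, W, hW, β, h, rfl⟩
      refine ⟨⟨⟨W, hW⟩, h, (β : Lˣ ⧸ N)⟩, Subtype.ext ?_⟩
      obtain ⟨⟨n, c, hc⟩, hn⟩ := QuotientGroup.mk_out_eq_mul N β
      have hc' : algebraMap Fq L (c : Fq) = n := congrArg Units.val hc
      change mulSub (((β : Lˣ ⧸ N).out : Lˣ) : L) (W.map (phi ω γ h)) = _
      rw [hn, Units.val_mul, ← mulSub_mul]
      change mulSub (β : L) (mulSub (n : L) _) = _
      rw [← hc', mulSub_base]
  rw [← Nat.card_congr (Equiv.ofBijective f hf), Nat.card_prod, Nat.card_prod,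
    Subgroup.card_eq_card_quotient_mul_card_subgroup N, hN]
  ring

/-- The index count `(q-1)·Q·(Q^{ℓ+1} - 1)/(Q - 1)` with `Q = |K|`, a geometric sum over `ℓ₁`. -/
lemma card_idx [Finite K] (q : ℕ) :
    Nat.card (Idx K q ℓ) * (Nat.card K - 1) =
      (q - 1) * Nat.card K * (Nat.card K ^ (ℓ + 1) - 1) := by
  have hfin : ∀ l : ℕ, Finite (Polynomial.degreeLT K l) := fun l =>
    Finite.of_equiv _ (Polynomial.degreeLTEquiv K l).symm.toEquiv
  have hB : ∀ l : ℕ, Nat.card (Polynomial.degreeLT K l) = Nat.card K ^ l := fun l => by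
    rw [Nat.card_congr (Polynomial.degreeLTEquiv K l).toEquiv, Nat.card_fun]
    simp
  have hK : 1 < Nat.card K := Finite.one_lt_card
  rw [Nat.card_sigma]
  simp only [Nat.card_prod, hB, Nat.card_fin]
  rw [← Finset.sum_mul, Fin.sum_univ_eq_sum_range (fun l => Nat.card K ^ l),
    ← geom_sum_mul_of_one_le hK.le]
  ring

end Maps

/-! ### Matching the explicit indices, and the minimum distance -/

lemma sum_Icc_one_eq {M : Type*} [AddCommMonoid M] (n : ℕ) (f : ℕ → M) :
    ∑ t ∈ Finset.Icc 1 n, f t = ∑ t ∈ Finset.range n, f (t + 1) := by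
  rw [← Finset.Ico_add_one_right_eq_Icc, Finset.sum_Ico_eq_sum_range]
  simp [add_comm]

open Polynomial in
/-- The images under the maps given by explicit coefficient data `(ℓ₀, α, a, j, ℓ₁)` are those
under `Φ_h` for normalised indices `h`; conversely `ℓ₀` is recovered as the degree of `X·B`. -/
lemma admissible_iff {Fq K L : Type*} [Field Fq] [Fintype Fq] [Field K] [Field L] [Algebra Fq K]
    [Algebra Fq L] [Algebra K L] [IsScalarTower Fq K L] (ℓ : ℕ) (ω : K) (γ : L)
    (W : Submodule Fq K) (Y : Submodule Fq L) :
    (∃ (β : Lˣ) (l0 : ℕ) (α : ℕ → K) (a : K) (j l1 : ℕ),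
      l0 ≤ ℓ ∧ (1 ≤ l0 → α l0 ≠ 0) ∧ j ≤ Fintype.card Fq - 2 ∧ l0 ≤ l1 ∧ l1 ≤ ℓ ∧
      ∃ Φ : K →ₗ[Fq] L,
        (∀ u : K, Φ u = algebraMap K L u *
            (1 + ∑ t ∈ Finset.Icc 1 l0, algebraMap K L (α t) * γ ^ t)
          + algebraMap K L (ω ^ j * (u ^ Fintype.card Fq + a * u)) * γ ^ (l1 + 1)) ∧
        Y = mulSub (β : L) (Submodule.map Φ W)) ↔
    ∃ (β : Lˣ) (h : Idx K (Fintype.card Fq) ℓ), Y = mulSub (β : L) (W.map (phi ω γ h)) := by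
  have hq : 1 < Fintype.card Fq := Fintype.one_lt_card
  constructor
  · rintro ⟨β, l0, α, a, j, l1, hl0, -, hj, hl01, hl1, Φ, hΦ, rfl⟩
    have hB : (∑ t ∈ Finset.range l0, C (α (t + 1)) * X ^ t) ∈ degreeLT K l1 := by
      refine Submodule.sum_mem _ fun t ht => mem_degreeLT.mpr ?_
      refine (degree_C_mul_X_pow_le _ _).trans_lt ?_
      have := Finset.mem_range.mp ht
      exact_mod_cast (by omega : t < l1)
    refine ⟨β, ⟨⟨l1, by omega⟩, ⟨_, hB⟩, a, ⟨j, by omega⟩⟩, ?_⟩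
    congr 2
    ext u
    rw [hΦ]
    change _ = aeval γ (phiPoly Fq ω _ u)
    simp only [phiPoly, map_add, map_mul, aeval_C, map_one, aeval_X, map_sum, map_pow,
      sum_Icc_one_eq, Finset.mul_sum]
    congr 3
    refine Finset.sum_congr rfl fun t _ => ?_
    ring
  · rintro ⟨β, ⟨l, B, a, j⟩, rfl⟩
    have hl : (l : ℕ) ≤ ℓ := Nat.lt_succ_iff.mp l.2
    have hdeg : (X * (B : K[X])).natDegree ≤ (l : ℕ) := by
      by_cases hB0 : (B : K[X]) = 0
      · simp [hB0]
      · have := (natDegree_lt_iff_degree_lt hB0).mpr (mem_degreeLT.mp B.2)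
        rw [natDegree_X_mul hB0]
        omega
    refine ⟨β, (X * (B : K[X])).natDegree, (X * (B : K[X])).coeff, a, j, l, hdeg.trans hl, ?_,
      by omega, hdeg, hl, phi ω γ ⟨l, B, a, j⟩, fun u => ?_, rfl⟩
    · intro h1 h0
      have : X * (B : K[X]) = 0 := leadingCoeff_eq_zero.mp h0
      rw [this] at h1
      simp at h1
    · change aeval γ (phiPoly Fq ω _ u) = _
      have hsum : ∑ t ∈ Finset.Icc 1 (X * (B : K[X])).natDegree,
          algebraMap K L ((X * (B : K[X])).coeff t) * γ ^ t = aeval γ (X * (B : K[X])) := by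
        rw [aeval_eq_sum_range, Finset.sum_range_succ', sum_Icc_one_eq]
        simp [Algebra.smul_def]
      rw [hsum]
      simp only [phiPoly, map_add, map_mul, aeval_C, map_one, aeval_X, map_pow]

open Polynomial in
lemma isGeneric_of_adjoin {K L : Type*} [Field K] [Field L] [Algebra K L] [FiniteDimensional K L]
    {γ : L} {ℓ : ℕ} (hdim : (ℓ + 1) + (ℓ + 1) < finrank K L)
    (hγ : Algebra.adjoin K ({γ} : Set L) = ⊤) : IsGeneric K ℓ γ := by
  intro f hf h0
  by_contra hne
  have htop : IntermediateField.adjoin K ({γ} : Set L) = ⊤ := by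
    rw [eq_top_iff]
    intro x _
    exact IntermediateField.algebra_adjoin_le_adjoin K _ (hγ ▸ Algebra.mem_top)
  have hmin := (Field.primitive_element_iff_minpoly_natDegree_eq K γ).mp htop
  have := natDegree_le_of_dvd (minpoly.dvd K γ h0) hne
  omega

/-- A constant-dimension cyclic code whose distinct members meet in dimension at most one, and
which contains a member of full-length orbit, has minimum distance `2k - 2`: for independent
`x, y ∈ X` the codewords `X` and `(y/x)·X` share `y`. -/
lemma minDist_eq {Fq L : Type*} [Field Fq] [Field L] [Algebra Fq L] [FiniteDimensional Fq L]
    {C : Set (Submodule Fq L)} {k : ℕ} (hk : 2 ≤ k) (hdim : ∀ X ∈ C, finrank Fq ↥X = k)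
    (hcyc : ∀ X ∈ C, ∀ u : Lˣ, mulSub (u : L) X ∈ C)
    (hint : ∀ Y ∈ C, ∀ Z ∈ C, 1 < finrank Fq ↥(Y ⊓ Z) → Y = Z)
    {X : Submodule Fq L} (hX : X ∈ C)
    (hstab : ∀ u : Lˣ, mulSub (u : L) X = X → ∃ c : Fqˣ, (u : L) = algebraMap Fq L (c : Fq)) :
    minDist C = 2 * k - 2 := by
  have hsum : ∀ Y ∈ C, ∀ Z ∈ C, finrank Fq ↥(Y ⊔ Z) + finrank Fq ↥(Y ⊓ Z) = 2 * k := by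
    intro Y hY Z hZ
    rw [Submodule.finrank_sup_add_finrank_inf_eq, hdim Y hY, hdim Z hZ]
    omega
  have hXbot : X ≠ ⊥ := by
    rintro rfl
    have := hdim _ hX
    rw [finrank_bot] at this
    omega
  obtain ⟨x, hx, hx0⟩ := Submodule.exists_mem_ne_zero_of_ne_bot hXbot
  obtain ⟨y, hy, hxy⟩ : ∃ y ∈ X, ∀ c : Fq, c • x ≠ y := by
    by_contra hcon
    push Not at hcon
    have hle : finrank Fq X ≤ 1 := finrank_le_one (⟨x, hx⟩ : X) (by
      rintro ⟨w, hw⟩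
      obtain ⟨c, hc⟩ := hcon w hw
      exact ⟨c, Subtype.ext hc⟩)
    rw [hdim X hX] at hle
    omega
  have hy0 : y ≠ 0 := fun h0 => hxy 0 (by simp [h0])
  let u : Lˣ := Units.mk0 (y / x) (div_ne_zero hy0 hx0)
  have hne : mulSub (u : L) X ≠ X := by
    intro heq
    obtain ⟨c, hc⟩ := hstab u heq
    refine hxy c ?_
    rw [Algebra.smul_def, ← hc, Units.val_mk0, div_mul_cancel₀ _ hx0]
  have hle : ∀ Y ∈ C, ∀ Z ∈ C, Y ≠ Z → finrank Fq ↥(Y ⊓ Z) ≤ 1 := fun Y hY Z hZ hYZ =>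
    not_lt.mp fun h => hYZ (hint Y hY Z hZ h)
  have hmem : y ∈ mulSub (u : L) X ⊓ X :=
    ⟨⟨x, hx, by rw [LinearMap.mulLeft_apply, Units.val_mk0, div_mul_cancel₀ _ hx0]⟩, hy⟩
  have hpos : 1 ≤ finrank Fq ↥(mulSub (u : L) X ⊓ X) := by
    rw [Submodule.one_le_finrank_iff]
    exact fun h0 => hy0 ((Submodule.mem_bot Fq).mp (h0 ▸ hmem))
  have huX := hcyc X hX u
  apply le_antisymm
  · refine Nat.sInf_le ⟨_, huX, X, hX, hne, ?_⟩
    have h1 := hsum _ huX X hX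
    have h2 := hle _ huX X hX hne
    unfold sdist
    omega
  · refine le_csInf ⟨_, _, huX, X, hX, hne, rfl⟩ ?_
    rintro _ ⟨Y, hY, Z, hZ, hYZ, rfl⟩
    have h1 := hsum Y hY Z hZ
    have h2 := hle Y hY Z hZ hYZ
    unfold sdist
    omega

/-! ### The iterated construction -/

/-- The set reached after `m` steps of a relation, described recursively or by whole chains. -/
lemma mem_iff_chain {T : ℕ → Type*} [∀ i, Inhabited (T i)] (x₀ : T 0)
    (R : ∀ i, T i → T (i + 1) → Prop) (D : ∀ i, Set (T i)) (hD0 : D 0 = {x₀})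
    (hD : ∀ i, D (i + 1) = {y | ∃ x ∈ D i, R i x y}) (m : ℕ) (x : T m) :
    x ∈ D m ↔ ∃ W : ∀ i, T i, W 0 = x₀ ∧ (∀ i, i < m → R i (W i) (W (i + 1))) ∧ x = W m := by
  induction m with
  | zero =>
    rw [hD0, Set.mem_singleton_iff]
    constructor
    · rintro rfl
      exact ⟨Function.update (fun i => default) 0 x, by simp, by simp, by simp⟩
    · rintro ⟨W, h0, -, rfl⟩
      exact h0
  | succ m ih =>
    rw [hD]
    constructor
    · rintro ⟨y, hy, hR⟩
      obtain ⟨W, h0, hW, rfl⟩ := (ih y).mp hy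
      have hne : ∀ i, i < m + 1 → Function.update W (m + 1) x i = W i := fun i hi =>
        Function.update_of_ne (by omega) _ _
      refine ⟨Function.update W (m + 1) x, by rw [hne 0 (by omega), h0], ?_, by simp⟩
      intro i hi
      rw [hne i hi]
      rcases Nat.lt_succ_iff_lt_or_eq.mp hi with hlt | rfl
      · rw [hne (i + 1) (by omega)]
        exact hW i hlt
      · rw [Function.update_self]
        exact hR
    · rintro ⟨W, h0, hW, rfl⟩
      exact ⟨W m, (ih _).mpr ⟨W, h0, fun i hi => hW i (by omega), rfl⟩, hW m (by omega)⟩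

/-- The codes `C_i` in `F_{q^{p^i k}}` obtained after `i` levels of the construction. -/
def code {Fq : Type*} [Field Fq] [Fintype Fq] (F : ℕ → Type*) [∀ i, Field (F i)]
    [∀ i, Algebra Fq (F i)] [∀ i, Algebra (F i) (F (i + 1))]
    [∀ i, IsScalarTower Fq (F i) (F (i + 1))] (ω : (i : ℕ) → F i) (γ : (i : ℕ) → F (i + 1))
    (ℓ : ℕ) : (i : ℕ) → Set (Submodule Fq (F i))
  | 0 => {⊤}
  | i + 1 => stepCode (ω i) (γ i) ℓ (code F ω γ ℓ i)

/-- The iterated odd-prime-power construction in `G_q(p^e k, k)`: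
`F i` is the field `F_{q^{p^i k}}` for `0 ≤ i ≤ e`, with `ℓ = (p-3)/2`; at each level
`i < e` one uses a primitive element `ω i` of `F i` and `γ i` generating `F (i+1)` over
`F i`, and `C` consists of all images of `F_{q^k}` under compositions of scaled admissible
maps. Then `C` is a cyclic code with minimum distance `2k-2` and cardinality
`∏_{i=1}^{e} q^{p^{i-1}k}(q^{(ℓ+1)p^{i-1}k}-1)(q^{p^i k}-1)/(q^{p^{i-1}k}-1)`. -/
theorem statement8
    {Fq : Type*} [Field Fq] [Fintype Fq]
    (q k p e : ℕ) (hq : Fintype.card Fq = q) (hk : 2 ≤ k)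
    (hp : p.Prime) (hodd : Odd p) (he : 1 ≤ e)
    (F : ℕ → Type*) [∀ i, Field (F i)] [∀ i, Algebra Fq (F i)]
    [∀ i, Algebra (F i) (F (i + 1))] [∀ i, IsScalarTower Fq (F i) (F (i + 1))]
    (hdim : ∀ i, i ≤ e → finrank Fq (F i) = p ^ i * k)
    (ω : (i : ℕ) → F i)
    (hω : ∀ i, i < e → ∀ x : F i, x ≠ 0 → ∃ j : ℕ, (ω i) ^ j = x)
    (γ : (i : ℕ) → F (i + 1))
    (hγ : ∀ i, i < e → Algebra.adjoin (F i) ({γ i} : Set (F (i + 1))) = ⊤)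
    (C : Set (Submodule Fq (F e)))
    (hC : C = {X | ∃ W : (i : ℕ) → Submodule Fq (F i),
      W 0 = ⊤ ∧
      (∀ i, i < e →
        ∃ (β : (F (i + 1))ˣ) (l0 : ℕ) (α : ℕ → F i) (a : F i) (j l1 : ℕ),
          l0 ≤ (p - 3) / 2 ∧ (1 ≤ l0 → α l0 ≠ 0) ∧ j ≤ q - 2 ∧
          l0 ≤ l1 ∧ l1 ≤ (p - 3) / 2 ∧
          ∃ Φ : F i →ₗ[Fq] F (i + 1),
            (∀ u : F i, Φ u = algebraMap (F i) (F (i + 1)) u *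
                (1 + ∑ t ∈ Finset.Icc 1 l0,
                  algebraMap (F i) (F (i + 1)) (α t) * (γ i) ^ t)
              + algebraMap (F i) (F (i + 1)) ((ω i) ^ j * (u ^ q + a * u)) *
                  (γ i) ^ (l1 + 1)) ∧
            W (i + 1) = mulSub (β : F (i + 1)) (Submodule.map Φ (W i))) ∧
      X = W e}) :
    (∀ X ∈ C, finrank Fq ↥X = k) ∧
    (∀ X ∈ C, ∀ u : (F e)ˣ, mulSub (u : F e) X ∈ C) ∧
    minDist C = 2 * k - 2 ∧
    C.ncard = ∏ i ∈ Finset.range e,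
      q ^ (p ^ i * k) * (q ^ (((p - 3) / 2 + 1) * p ^ i * k) - 1) *
        ((q ^ (p ^ (i + 1) * k) - 1) / (q ^ (p ^ i * k) - 1)) := by
  subst hq
  set ℓ := (p - 3) / 2 with hℓ
  have hp2 := hp.two_le
  have hpℓ : (ℓ + 1) + (ℓ + 1) < p := by
    obtain ⟨m, hm⟩ := hodd
    omega
  have hfinrank : ∀ i, i ≤ e → 1 < finrank Fq (F i) := fun i hi => by
    rw [hdim i hi]
    have : 1 ≤ p ^ i := Nat.one_le_pow _ _ (by omega)
    nlinarith
  have hfd : ∀ i, i ≤ e → FiniteDimensional Fq (F i) := fun i hi =>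
    FiniteDimensional.of_finrank_pos (by have := hfinrank i hi; omega)
  have hgen : ∀ i, i < e → IsGeneric (F i) ℓ (γ i) := by
    intro i hi
    have h1 := hfd i hi.le
    have h2 := hfd (i + 1) hi
    have h3 : FiniteDimensional (F i) (F (i + 1)) := FiniteDimensional.right Fq (F i) (F (i + 1))
    refine isGeneric_of_adjoin ?_ (hγ i hi)
    have hmul := Module.finrank_mul_finrank Fq (F i) (F (i + 1))
    have hpos : 0 < p ^ i * k := by
      rw [← hdim i hi.le]; exact Module.finrank_pos
    rw [hdim i hi.le, hdim (i + 1) hi, pow_succ] at hmul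
    have : finrank (F i) (F (i + 1)) = p := by
      apply Nat.eq_of_mul_eq_mul_left hpos
      rw [hmul]
      ring
    omega
  have hCcode : C = code F ω γ ℓ e := by
    ext X
    rw [hC, mem_iff_chain (T := fun i => Submodule Fq (F i)) ⊤
      (fun i W Y => ∃ (β : (F (i + 1))ˣ) (h : Idx (F i) (Fintype.card Fq) ℓ),
        Y = mulSub (β : F (i + 1)) (W.map (phi (ω i) (γ i) h))) (code F ω γ ℓ) rfl
      (fun i => rfl) e X]
    simp only [← admissible_iff]
    rfl
  have hrank : ∀ i, i ≤ e → ∀ W ∈ code (Fq := Fq) F ω γ ℓ i, finrank Fq W = k := by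
    intro i
    induction i with
    | zero =>
      rintro - W rfl
      rw [finrank_top, hdim 0 (by omega)]
      simp
    | succ i ih => exact fun hi => step_finrank (hgen i hi) (ih (by omega))
  have hinter : ∀ i, i ≤ e → ∀ U ∈ code (Fq := Fq) F ω γ ℓ i, ∀ W ∈ code (Fq := Fq) F ω γ ℓ i,
      1 < finrank Fq ↥(U ⊓ W) → U = W := by
    intro i
    induction i with
    | zero =>
      rintro - U rfl W rfl -
      rfl
    | succ i ih =>
      intro hi
      have := hfd i (by omega)
      exact step_inter (hω i hi) (hgen i hi) (ih (by omega))
  have hnonempty : ∀ i, (code (Fq := Fq) F ω γ ℓ i).Nonempty := by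
    intro i
    induction i with
    | zero => exact ⟨⊤, rfl⟩
    | succ i ih =>
      obtain ⟨W, hW⟩ := ih
      have hq : 1 < Fintype.card Fq := Fintype.one_lt_card
      exact ⟨_, W, hW, 1, ⟨0, 0, 0, ⟨0, by omega⟩⟩, rfl⟩
  have hcard : ∀ i, i ≤ e → Nat.card (code (Fq := Fq) F ω γ ℓ i) =
      ∏ i ∈ Finset.range i, Fintype.card Fq ^ (p ^ i * k) *
        (Fintype.card Fq ^ ((ℓ + 1) * p ^ i * k) - 1) *
        ((Fintype.card Fq ^ (p ^ (i + 1) * k) - 1) / (Fintype.card Fq ^ (p ^ i * k) - 1)) := by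
    intro i
    induction i with
    | zero =>
      intro _
      change Nat.card ({⊤} : Set (Submodule Fq (F 0))) = _
      simp
    | succ i ih =>
      intro hi
      have h1 := hfd i (by omega)
      have h2 := hfd (i + 1) hi
      have hfinK : Finite (F i) := Module.finite_of_finite Fq
      have hq : 1 < Fintype.card Fq := Fintype.one_lt_card
      have hS := step_card (hω i hi) (hgen i hi) (S := code (Fq := Fq) F ω γ ℓ i)
        (fun W hW => by rw [hrank i (by omega) W hW]; omega)
      have hI := card_idx (K := F i) (ℓ := ℓ) (Fintype.card Fq)
      rw [Nat.card_units, Module.natCard_eq_pow_finrank (K := Fq) (V := F (i + 1)),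
        hdim (i + 1) hi, Nat.card_eq_fintype_card (α := Fq)] at hS
      rw [Module.natCard_eq_pow_finrank (K := Fq) (V := F i),
        hdim i (by omega), Nat.card_eq_fintype_card (α := Fq)] at hI
      rw [Finset.prod_range_succ, ← ih (by omega)]
      change Nat.card (stepCode (ω i) (γ i) ℓ (code (Fq := Fq) F ω γ ℓ i)) = _
      have hT : Fintype.card Fq ^ ((ℓ + 1) * p ^ i * k) =
          (Fintype.card Fq ^ (p ^ i * k)) ^ (ℓ + 1) := by
        rw [← pow_mul]; congr 1; ring
      obtain ⟨D, hD⟩ : Fintype.card Fq ^ (p ^ i * k) - 1 ∣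
          Fintype.card Fq ^ (p ^ (i + 1) * k) - 1 :=
        Nat.pow_sub_one_dvd_pow_sub_one _ ⟨p, by ring⟩
      have hQ : 0 < Fintype.card Fq ^ (p ^ i * k) - 1 := by
        have := Nat.one_lt_pow (n := p ^ i * k) (a := Fintype.card Fq)
          (by have := hfinrank i (by omega); rw [hdim i (by omega)] at this; omega) hq
        omega
      rw [hT, hD, Nat.mul_div_cancel_left _ hQ]
      rw [hD] at hS
      refine Nat.eq_of_mul_eq_mul_right (m := Fintype.card Fq - 1) (by omega) ?_
      rw [hS]
      calc _ = Nat.card (code (Fq := Fq) F ω γ ℓ i) *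
            (Nat.card (Idx (F i) (Fintype.card Fq) ℓ) * (Fintype.card Fq ^ (p ^ i * k) - 1)) * D := by
              ring
        _ = _ := by rw [hI]; ring
  subst hCcode
  obtain ⟨m, rfl⟩ : ∃ m, e = m + 1 := ⟨e - 1, by omega⟩
  have hcyc : ∀ X ∈ code (Fq := Fq) F ω γ ℓ (m + 1), ∀ u : (F (m + 1))ˣ,
      mulSub (u : F (m + 1)) X ∈ code (Fq := Fq) F ω γ ℓ (m + 1) := step_cyclic
  refine ⟨hrank _ le_rfl, hcyc, ?_, hcard _ le_rfl⟩
  have h1 := hfd m (by omega)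
  have h2 := hfd (m + 1) le_rfl
  obtain ⟨X, hX⟩ := hnonempty (m + 1)
  refine minDist_eq hk (hrank _ le_rfl) hcyc (hinter _ le_rfl) hX fun u hu => ?_
  exact step_stab (hω m (by omega)) (hgen m (by omega)) hX
    (by rw [hrank _ le_rfl X hX]; omega) u hu
end
end

section
/- Fix an integer e ≥ 2, and for integers q ≥ 3 and k ≥ 2 set S(q,k) = ∏_{i=1}^{e} ⌊(q−1)/2⌋·(q^{2^i k}−1)/(q−1), which is the cardinality of the cyclic subspace code in G_q(2^e k, k) with minimum distance 2k−2 obtained by iterating the Roth–Raviv–Tamo construction via the nesting operation. Then: (i) for every fixed odd prime power q ≥ 3, the quotient J_q(2^e k, 2k−2, k) / S(q,k) tends to 2^e as k tends to infinity; (ii) for every fixed integer k ≥ 2, the quotient J_q(2^e k, 2k−2, k) / S(q,k) tends to 2^e as the integer q tends to infinity. -/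
/-!
Both limits are instances of one asymptotic computation along an arbitrary filter, for
`q` and `k` varying with a parameter so that `q ^ (k - 1) → ∞` and `⌊(q-1)/2⌋ ∼ (q-1)/2`
(an equality when `q` is odd). With `n = 2^e k`, dropping the ones subtracted from the powers
of `q` and the floors in `J` changes nothing up to asymptotic equivalence, since these tend to
infinity. Hence `J_q(n,2k-2,k) ∼ (q^(n-k))^2` (`Jbound_isEquivalent`), and, since
`2^1 + ⋯ + 2^e = 2 (2^e - 1)`, `S(q,k) ∼ (1/2)^e (q^(n-k))^2` (`Ssize_isEquivalent`).
The quotient of the two equivalents is the constant `2^e`.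
-/

open Filter

/-- The Johnson type bound II for constant-dimension subspace codes of minimum
distance `2k-2`:
`J_q(n,2k-2,k) = ⌊((q^n-1)/(q^k-1))·⌊(q^{n-1}-1)/(q^{k-1}-1)⌋⌋`,
with real divisions and floors. -/
noncomputable def Jbound (q n k : ℕ) : ℤ :=
  ⌊(((q : ℝ) ^ n - 1) / ((q : ℝ) ^ k - 1)) *
    ((⌊(((q : ℝ) ^ (n - 1) - 1) / ((q : ℝ) ^ (k - 1) - 1))⌋ : ℤ) : ℝ)⌋

/-- Size of the nested Roth–Raviv–Tamo code in `G_q(2^e k, k)`: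
`S(q,k) = ∏_{i=1}^{e} ⌊(q-1)/2⌋·(q^{2^i k}-1)/(q-1)` (all divisions are exact or floors). -/
def Ssize (e q k : ℕ) : ℕ :=
  ∏ i ∈ Finset.Icc 1 e, ((q - 1) / 2) * ((q ^ (2 ^ i * k) - 1) / (q - 1))

open Asymptotics Topology

lemma int_floor_isEquivalent {α : Type*} {l : Filter α} {f : α → ℝ}
    (hf : Tendsto f l atTop) : (fun t => (⌊f t⌋ : ℝ)) ~[l] f := by
  refine ((isEquivalent_nat_floor (R := ℝ)).comp_tendsto hf).congr_left ?_
  filter_upwards [hf.eventually_ge_atTop 0] with t ht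
  simpa using natCast_floor_eq_intCast_floor ht

lemma sub_one_isEquivalent {α : Type*} {l : Filter α} {f : α → ℝ}
    (hf : Tendsto f l atTop) : (fun t => f t - 1) ~[l] f := by
  have h : (fun _ : α => (1 : ℝ)) =o[l] f :=
    isLittleO_const_left.2 (Or.inr (tendsto_norm_atTop_atTop.comp hf))
  exact IsEquivalent.refl.sub_isLittleO h

/-- If `q ^ (k - 1) → ∞`, then so does any power of `q` with an exponent at least `k - 1`. -/
lemma tendsto_pow_of_le {α : Type*} {l : Filter α} {q k m : α → ℕ}
    (hq : ∀ᶠ t in l, 2 ≤ q t) (hx : Tendsto (fun t => (q t : ℝ) ^ (k t - 1)) l atTop)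
    (hm : ∀ t, k t - 1 ≤ m t) : Tendsto (fun t => (q t : ℝ) ^ m t) l atTop := by
  refine tendsto_atTop_mono' l ?_ hx
  filter_upwards [hq] with t ht
  exact pow_le_pow_right₀ (by exact_mod_cast (by omega : 1 ≤ q t)) (hm t)

lemma Jbound_isEquivalent {α : Type*} {l : Filter α} {q k n : α → ℕ}
    (hq : ∀ᶠ t in l, 2 ≤ q t) (hk : ∀ᶠ t in l, 2 ≤ k t) (hn : ∀ t, 2 * k t ≤ n t)
    (hx : Tendsto (fun t => (q t : ℝ) ^ (k t - 1)) l atTop) :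
    (fun t => (Jbound (q t) (n t) (k t) : ℝ)) ~[l]
      fun t => ((q t : ℝ) ^ (n t - k t)) ^ 2 := by
  have htop : Tendsto (fun t => (q t : ℝ) ^ (n t - k t)) l atTop :=
    tendsto_pow_of_le hq hx fun t => by have := hn t; omega
  have hA : (fun t => ((q t : ℝ) ^ n t - 1) / ((q t : ℝ) ^ k t - 1)) ~[l]
      fun t => (q t : ℝ) ^ (n t - k t) := by
    refine ((sub_one_isEquivalent (tendsto_pow_of_le hq hx fun t => by
      have := hn t; omega)).div (sub_one_isEquivalent (tendsto_pow_of_le hq hx fun t => by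
      omega))).congr_right ?_
    filter_upwards [hq] with t ht
    have h0 : (q t : ℝ) ≠ 0 := by exact_mod_cast (by omega : q t ≠ 0)
    have := hn t
    rw [Pi.div_apply, div_eq_iff (pow_ne_zero _ h0), ← pow_add]
    congr 1
    omega
  have hB : (fun t => ((q t : ℝ) ^ (n t - 1) - 1) / ((q t : ℝ) ^ (k t - 1) - 1)) ~[l]
      fun t => (q t : ℝ) ^ (n t - k t) := by
    refine ((sub_one_isEquivalent (tendsto_pow_of_le hq hx fun t => by
      have := hn t; omega)).div (sub_one_isEquivalent hx)).congr_right ?_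
    filter_upwards [hq, hk] with t ht hkt
    have h0 : (q t : ℝ) ≠ 0 := by exact_mod_cast (by omega : q t ≠ 0)
    have := hn t
    rw [Pi.div_apply, div_eq_iff (pow_ne_zero _ h0), ← pow_add]
    congr 1
    omega
  have hP := hA.mul ((int_floor_isEquivalent (hB.symm.tendsto_atTop htop)).trans hB)
  have hF := int_floor_isEquivalent (hP.symm.tendsto_atTop (htop.atTop_mul_atTop₀ htop))
  refine (hF.trans hP).congr_right (Eventually.of_forall fun t => ?_)
  simp [sq]

lemma sum_two_pow_mul (e m : ℕ) :
    ∑ i ∈ Finset.Icc 1 e, 2 ^ i * m = (2 ^ e * m - m) * 2 := by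
  have h : ∑ i ∈ Finset.Icc 1 e, 2 ^ i * m + 2 * m = 2 ^ e * m * 2 := by
    induction e with
    | zero => simp; ring
    | succ d ih =>
      rw [Finset.sum_Icc_succ_top (by omega), pow_succ]
      linarith
  omega

lemma Ssize_isEquivalent {α : Type*} {l : Filter α} {q k : α → ℕ} (e : ℕ)
    (hq : ∀ᶠ t in l, 2 ≤ q t)
    (hx : Tendsto (fun t => (q t : ℝ) ^ (k t - 1)) l atTop)
    (hr : Tendsto (fun t => (((q t - 1) / 2 : ℕ) : ℝ) / ((q t : ℝ) - 1)) l (𝓝 (1 / 2))) :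
    (fun t => (Ssize e (q t) (k t) : ℝ)) ~[l]
      fun t => (1 / 2 : ℝ) ^ e * ((q t : ℝ) ^ (2 ^ e * k t - k t)) ^ 2 := by
  have hfac : ∀ i ∈ Finset.Icc 1 e,
      (fun t => (((q t - 1) / 2 * ((q t ^ (2 ^ i * k t) - 1) / (q t - 1)) : ℕ) : ℝ)) ~[l]
        fun t => (1 / 2 : ℝ) * (q t : ℝ) ^ (2 ^ i * k t) := by
    intro i _
    have h1 := (isEquivalent_const_iff_tendsto (by norm_num : (1 / 2 : ℝ) ≠ 0)).2 hr
    have h2 := sub_one_isEquivalent (tendsto_pow_of_le (m := fun t => 2 ^ i * k t) hq hx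
      fun t => by have := Nat.le_mul_of_pos_left (k t) (Nat.two_pow_pos i); omega)
    refine (h1.mul h2).congr_left ?_
    filter_upwards [hq] with t ht
    have hdvd : q t - 1 ∣ q t ^ (2 ^ i * k t) - 1 := by
      simpa using Nat.sub_dvd_pow_sub_pow (q t) 1 (2 ^ i * k t)
    have h0 : ((q t - 1 : ℕ) : ℝ) ≠ 0 := by exact_mod_cast (by omega : q t - 1 ≠ 0)
    rw [Nat.cast_mul, Nat.cast_div hdvd h0, Nat.cast_sub (Nat.one_le_pow _ _ (by omega)),
      Nat.cast_sub (by omega : 1 ≤ q t), Pi.mul_apply]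
    push_cast
    ring
  refine ((IsEquivalent.finsetProd hfac).congr_left ?_).congr_right ?_
  · exact Eventually.of_forall fun t => by simp [Ssize]
  · refine Eventually.of_forall fun t => ?_
    simp only [Finset.prod_mul_distrib, Finset.prod_const, Nat.card_Icc,
      Finset.prod_pow_eq_pow_sum, sum_two_pow_mul, Nat.add_sub_cancel]
    rw [pow_mul]

/-- The common form of both limits, along an arbitrary filter. -/
lemma tendsto_Jbound_div_Ssize {α : Type*} {l : Filter α} {q k : α → ℕ} {e : ℕ} (he : 2 ≤ e)
    (hq : ∀ᶠ t in l, 2 ≤ q t) (hk : ∀ᶠ t in l, 2 ≤ k t)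
    (hx : Tendsto (fun t => (q t : ℝ) ^ (k t - 1)) l atTop)
    (hr : Tendsto (fun t => (((q t - 1) / 2 : ℕ) : ℝ) / ((q t : ℝ) - 1)) l (𝓝 (1 / 2))) :
    Tendsto (fun t => (Jbound (q t) (2 ^ e * k t) (k t) : ℝ) / (Ssize e (q t) (k t) : ℝ)) l
      (𝓝 (2 ^ e)) := by
  have h2 : 2 ≤ 2 ^ e := Nat.le_self_pow (by omega) 2
  have hJ := Jbound_isEquivalent (n := fun t => 2 ^ e * k t) hq hk
    (fun t => Nat.mul_le_mul_right _ h2) hx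
  refine IsEquivalent.tendsto_const
    ((hJ.div (Ssize_isEquivalent e hq hx hr)).congr_right ?_)
  filter_upwards [hq] with t ht
  have h0 : (q t : ℝ) ≠ 0 := by exact_mod_cast (by omega : q t ≠ 0)
  simp only [Pi.div_apply, Function.const_apply]
  rw [div_mul_cancel_right₀ (by positivity)]
  simp

/-- `J_q(2^e k, 2k-2, k) / S(q,k) → 2^e`, both as `k → ∞` for a fixed
odd prime power `q ≥ 3`, and as `q → ∞` for a fixed `k ≥ 2`. -/
theorem statement12 (e : ℕ) (he : 2 ≤ e) :
    (∀ q : ℕ, IsPrimePow q → Odd q → 3 ≤ q →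
      Tendsto (fun k : ℕ =>
          (Jbound q (2 ^ e * k) k : ℝ) / (Ssize e q k : ℝ))
        atTop (nhds (2 ^ e))) ∧
    (∀ k : ℕ, 2 ≤ k →
      Tendsto (fun q : ℕ =>
          (Jbound q (2 ^ e * k) k : ℝ) / (Ssize e q k : ℝ))
        atTop (nhds (2 ^ e))) := by
  refine ⟨fun q _ hodd hq => ?_, fun k hk => ?_⟩
  · refine tendsto_Jbound_div_Ssize (q := fun _ => q) (k := fun k => k) he
      (Eventually.of_forall fun _ => by omega) (eventually_ge_atTop 2) ?_ ?_
    · exact (tendsto_pow_atTop_atTop_of_one_lt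
        (by exact_mod_cast (by omega : 1 < q))).comp (tendsto_sub_atTop_nat 1)
    · obtain ⟨m, rfl⟩ := hodd
      have hm : (m : ℝ) ≠ 0 := by exact_mod_cast (by omega : m ≠ 0)
      refine tendsto_const_nhds.congr fun _ => ?_
      rw [show (2 * m + 1 - 1) / 2 = m by omega]
      push_cast
      field_simp
      ring
  · refine tendsto_Jbound_div_Ssize (q := fun q => q) (k := fun _ => k) he
      (eventually_ge_atTop 2) (Eventually.of_forall fun _ => hk) ?_ ?_
    · exact (tendsto_pow_atTop (by omega)).comp tendsto_natCast_atTop_atTop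
    · have hc : Tendsto (fun q : ℕ => ((q : ℝ) - 1)) atTop atTop :=
        tendsto_atTop_add_const_right _ _ tendsto_natCast_atTop_atTop
      refine (((tendsto_nat_floor_mul_div_atTop (R := ℝ) (a := 1 / 2) (by norm_num)).comp
        hc)).congr' ?_
      filter_upwards [eventually_ge_atTop 1] with q hq
      have : (1 / 2 : ℝ) * ((q : ℝ) - 1) = ((q - 1 : ℕ) : ℝ) / (2 : ℕ) := by
        rw [Nat.cast_sub hq]
        push_cast
        ring
      simp only [Function.comp_apply]
      rw [this, Nat.floor_div_eq_div]
end

section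
/- Fix integers e ≥ 1 and e₁ ≥ 1, and for integers q ≥ 3 and k ≥ 2 set T(q,k) = [ ∏_{i₁=1}^{e₁} q^{3^{i₁−1}k}·(q^{3^{i₁}k}−1) ] · [ ∏_{i=1}^{e} ⌊(q−1)/2⌋·(q^{2^i·3^{e₁}k}−1)/(q−1) ], which is the cardinality of the cyclic subspace code in G_q(2^e·3^{e₁}·k, k) with minimum distance 2k−2 obtained by the nesting construction. Then: (i) for every fixed odd prime power q ≥ 3, the quotient J_q(2^e·3^{e₁}·k, 2k−2, k) / T(q,k) tends to 2^e as k tends to infinity; (ii) for every fixed integer k ≥ 2, the quotient J_q(2^e·3^{e₁}·k, 2k−2, k) / T(q,k) tends to 2^e as the integer q tends to infinity. -/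
/-!
Write `n = 2^e·3^{e₁}·k`. Up to factors tending to `1`, the Johnson bound equals `(q^{n-k})²`: each
quotient `(q^m-1)/(q^j-1)` is asymptotic to `q^{m-j}`, and the floors change it by at most `1`.
On the other side, the exponents occurring in `T(q,k)` telescope, since
`∑_{i≤e₁} (3^{i-1}+3^i) = 2·3^{e₁} - 2` and `∑_{i≤e} 2^i = 2·2^e - 2`, so that
`T(q,k)` is asymptotic to `(q^{n-k})²·(⌊(q-1)/2⌋/(q-1))^e`, and the last factor tends to `2^{-e}`.

Both limits are instances of `tendsto_ratio`, in which `q` and `k` vary along an arbitrary filter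
such that `q^{k-1} → ∞` and `⌊(q-1)/2⌋/(q-1) → 1/2`.
-/

open Filter

/-- Size of the nested code in `G_q(2^e·3^{e₁}·k, k)`:
`T(q,k) = [∏_{i₁=1}^{e₁} q^{3^{i₁-1}k}(q^{3^{i₁}k}-1)]·[∏_{i=1}^{e} ⌊(q-1)/2⌋(q^{2^i·3^{e₁}k}-1)/(q-1)]`. -/
def Tsize (e e₁ q k : ℕ) : ℕ :=
  (∏ i₁ ∈ Finset.Icc 1 e₁, q ^ (3 ^ (i₁ - 1) * k) * (q ^ (3 ^ i₁ * k) - 1)) *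
    ∏ i ∈ Finset.Icc 1 e, ((q - 1) / 2) * ((q ^ (2 ^ i * 3 ^ e₁ * k) - 1) / (q - 1))

open Topology

lemma tendsto_sub_one_div {α : Type*} {l : Filter α} {g : α → ℝ} (hg : Tendsto g l atTop) :
    Tendsto (fun a => (g a - 1) / g a) l (𝓝 1) := by
  have h : Tendsto (fun a => 1 - (g a)⁻¹) l (𝓝 (1 - 0)) :=
    tendsto_const_nhds.sub hg.inv_tendsto_atTop
  rw [sub_zero] at h
  refine h.congr' ?_
  filter_upwards [hg.eventually_gt_atTop 0] with a ha
  field_simp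

lemma tendsto_floor_div {α : Type*} {l : Filter α} {f g : α → ℝ} {c : ℝ}
    (hg : Tendsto g l atTop) (hf : Tendsto (fun a => f a / g a) l (𝓝 c)) :
    Tendsto (fun a => (⌊f a⌋ : ℝ) / g a) l (𝓝 c) := by
  have h : Tendsto (fun a => f a / g a - (g a)⁻¹) l (𝓝 (c - 0)) :=
    hf.sub hg.inv_tendsto_atTop
  rw [sub_zero] at h
  refine tendsto_of_tendsto_of_tendsto_of_le_of_le' h hf ?_ ?_
  · filter_upwards [hg.eventually_gt_atTop 0] with a ha
    have : f a / g a - (g a)⁻¹ = (f a - 1) / g a := by field_simp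
    rw [this]
    gcongr
    exact (Int.sub_one_lt_floor _).le
  · filter_upwards [hg.eventually_gt_atTop 0] with a ha
    gcongr
    exact Int.floor_le _

/-- The quotient `(q^m-1)/(q^j-1)` is asymptotic to `q^d` when `m = d + j`. -/
lemma tendsto_quot {α : Type*} {l : Filter α} {q : α → ℝ} {m j d : α → ℕ}
    (hm : Tendsto (fun a => q a ^ m a) l atTop) (hj : Tendsto (fun a => q a ^ j a) l atTop)
    (hd : ∀ᶠ a in l, m a = d a + j a) :
    Tendsto (fun a => ((q a ^ m a - 1) / (q a ^ j a - 1)) / q a ^ d a) l (𝓝 1) := by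
  have h := (tendsto_sub_one_div hm).div (tendsto_sub_one_div hj) one_ne_zero
  rw [div_one] at h
  refine h.congr' ?_
  filter_upwards [hm.eventually_gt_atTop 0, hj.eventually_gt_atTop 1, hd] with a h1 h2 h3
  have h4 : q a ^ m a = q a ^ d a * q a ^ j a := by rw [h3, pow_add]
  have h5 : q a ^ d a ≠ 0 := by
    intro h0
    rw [h4, h0, zero_mul] at h1
    exact lt_irrefl _ h1
  have h6 : q a ^ j a - 1 ≠ 0 := by linarith
  have h7 : q a ^ j a ≠ 0 := by linarith
  simp only [Pi.div_apply]
  rw [h4]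
  field_simp

lemma prod_three_mul (x : ℝ) (e₁ k : ℕ) :
    (∏ i ∈ Finset.Icc 1 e₁, x ^ (3 ^ (i - 1) * k) * x ^ (3 ^ i * k)) * x ^ (2 * k)
      = x ^ (2 * (3 ^ e₁ * k)) := by
  induction e₁ with
  | zero => simp
  | succ n ih =>
    rw [Finset.prod_Icc_succ_top (by omega), mul_right_comm, ih, Nat.add_sub_cancel,
      ← pow_add, ← pow_add]
    congr 1
    ring

lemma prod_two_mul (x : ℝ) (e N : ℕ) :
    (∏ i ∈ Finset.Icc 1 e, x ^ (2 ^ i * N)) * x ^ (2 * N) = x ^ (2 * (2 ^ e * N)) := by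
  induction e with
  | zero => simp
  | succ n ih =>
    rw [Finset.prod_Icc_succ_top (by omega), mul_right_comm, ih, ← pow_add]
    congr 1
    ring

/-- The code size, divided by its leading power of `q`, as a product of factors each of which has
an evident limit. -/
lemma Tsize_div (e e₁ q k : ℕ) (hq : 3 ≤ q) :
    (Tsize e e₁ q k : ℝ) / ((q : ℝ) ^ (2 ^ e * 3 ^ e₁ * k - k)) ^ 2
      = (∏ i ∈ Finset.Icc 1 e₁, ((q : ℝ) ^ (3 ^ i * k) - 1) / (q : ℝ) ^ (3 ^ i * k)) *
        ∏ i ∈ Finset.Icc 1 e, ((((q - 1) / 2 : ℕ) : ℝ) / ((q : ℝ) - 1)) *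
          (((q : ℝ) ^ (2 ^ i * 3 ^ e₁ * k) - 1) / (q : ℝ) ^ (2 ^ i * 3 ^ e₁ * k)) := by
  have hq0 : (q : ℝ) ≠ 0 := by
    have : q ≠ 0 := by omega
    exact_mod_cast this
  have hq1 : (q : ℝ) - 1 ≠ 0 := by
    have : (3 : ℝ) ≤ q := by exact_mod_cast hq
    linarith
  have hk : k ≤ 2 ^ e * 3 ^ e₁ * k := Nat.le_mul_of_pos_left _ (by positivity)
  have hT : (Tsize e e₁ q k : ℝ) =
      (∏ i ∈ Finset.Icc 1 e₁, (q : ℝ) ^ (3 ^ (i - 1) * k) * ((q : ℝ) ^ (3 ^ i * k) - 1)) *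
      ∏ i ∈ Finset.Icc 1 e, (((q - 1) / 2 : ℕ) : ℝ) *
        (((q : ℝ) ^ (2 ^ i * 3 ^ e₁ * k) - 1) / ((q : ℝ) - 1)) := by
    have hc : ∀ m : ℕ, ((q ^ m - 1 : ℕ) : ℝ) = (q : ℝ) ^ m - 1 := by
      intro m
      rw [Nat.cast_sub (Nat.one_le_pow _ _ (by omega))]
      simp
    unfold Tsize
    rw [Nat.cast_mul, Nat.cast_prod, Nat.cast_prod]
    congr 1
    · refine Finset.prod_congr rfl fun i _ => ?_
      rw [Nat.cast_mul, hc, Nat.cast_pow]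
    · refine Finset.prod_congr rfl fun i _ => ?_
      have hdvd : q - 1 ∣ q ^ (2 ^ i * 3 ^ e₁ * k) - 1 := by
        simpa using Nat.sub_dvd_pow_sub_pow q 1 (2 ^ i * 3 ^ e₁ * k)
      have hc1 : ((q - 1 : ℕ) : ℝ) = (q : ℝ) - 1 := by simpa using hc 1
      rw [Nat.cast_mul, Nat.cast_div hdvd (by rw [hc1]; exact hq1), hc, hc1]
  have hP := prod_three_mul (q : ℝ) e₁ k
  have hQ := prod_two_mul (q : ℝ) e (3 ^ e₁ * k)
  have hD : ((q : ℝ) ^ (2 ^ e * 3 ^ e₁ * k - k)) ^ 2 =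
      (∏ i ∈ Finset.Icc 1 e₁, (q : ℝ) ^ (3 ^ (i - 1) * k) * (q : ℝ) ^ (3 ^ i * k)) *
      ∏ i ∈ Finset.Icc 1 e, (q : ℝ) ^ (2 ^ i * (3 ^ e₁ * k)) := by
    apply mul_right_cancel₀ (pow_ne_zero (2 * k) hq0)
    rw [mul_right_comm (∏ i ∈ _, _), hP, mul_comm (_ ^ (2 * (3 ^ e₁ * k))), hQ, ← pow_mul, ← pow_add]
    congr 1
    rw [← mul_assoc (2 ^ e)]
    omega
  rw [hT, hD, mul_div_mul_comm, ← Finset.prod_div_distrib, ← Finset.prod_div_distrib]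
  congr 1
  · refine Finset.prod_congr rfl fun i _ => ?_
    rw [mul_div_mul_left _ _ (pow_ne_zero _ hq0)]
  · refine Finset.prod_congr rfl fun i _ => ?_
    rw [← mul_assoc (2 ^ i)]
    field_simp

lemma tendsto_ratio {α : Type*} {l : Filter α} {q k : α → ℕ} (e e₁ : ℕ) (he : 1 ≤ e)
    (hq : ∀ᶠ a in l, 3 ≤ q a) (hk : ∀ᶠ a in l, 2 ≤ k a)
    (hqk : Tendsto (fun a => (q a : ℝ) ^ (k a - 1)) l atTop)
    (hhalf : Tendsto (fun a => (((q a - 1) / 2 : ℕ) : ℝ) / ((q a : ℝ) - 1)) l (𝓝 (1 / 2))) :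
    Tendsto (fun a => (Jbound (q a) (2 ^ e * 3 ^ e₁ * k a) (k a) : ℝ) /
      (Tsize e e₁ (q a) (k a) : ℝ)) l (𝓝 (2 ^ e)) := by
  have hM : 2 ≤ 2 ^ e * 3 ^ e₁ := by
    calc 2 = 2 ^ 1 * 1 := by norm_num
      _ ≤ 2 ^ e * 3 ^ e₁ :=
        Nat.mul_le_mul (Nat.pow_le_pow_right (by norm_num) he) (Nat.one_le_pow _ _ (by norm_num))
  have hgrow : ∀ m : α → ℕ, (∀ᶠ a in l, k a - 1 ≤ m a) →
      Tendsto (fun a => (q a : ℝ) ^ m a) l atTop := by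
    intro m hm
    refine tendsto_atTop_mono' l ?_ hqk
    filter_upwards [hm, hq] with a h1 h2
    exact pow_le_pow_right₀ (by exact_mod_cast (by omega : 1 ≤ q a)) h1
  have hMk : ∀ a, 2 * k a ≤ 2 ^ e * 3 ^ e₁ * k a := fun a => Nat.mul_le_mul_right _ hM
  have hgd := hgrow (fun a => 2 ^ e * 3 ^ e₁ * k a - k a)
    (Eventually.of_forall fun a => by have := hMk a; omega)
  have hX := tendsto_quot (d := fun a => 2 ^ e * 3 ^ e₁ * k a - k a)
    (hgrow (fun a => 2 ^ e * 3 ^ e₁ * k a)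
      (Eventually.of_forall fun a => by have := hMk a; omega))
    (hgrow k (Eventually.of_forall fun a => by omega))
    (Eventually.of_forall fun a => by have := hMk a; omega)
  have hY := tendsto_floor_div hgd <| tendsto_quot (d := fun a => 2 ^ e * 3 ^ e₁ * k a - k a)
    (hgrow (fun a => 2 ^ e * 3 ^ e₁ * k a - 1)
      (Eventually.of_forall fun a => by have := hMk a; omega))
    hqk (by filter_upwards [hk] with a h; have := hMk a; omega)
  have hXY := hX.mul hY
  simp only [div_mul_div_comm, mul_one] at hXY
  have hJ := tendsto_floor_div (hgd.atTop_mul_atTop₀ hgd) hXY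
  have hone : ∀ c : ℕ, 1 ≤ c →
      Tendsto (fun a => ((q a : ℝ) ^ (c * k a) - 1) / (q a : ℝ) ^ (c * k a)) l (𝓝 1) := by
    intro c hc
    refine tendsto_sub_one_div (hgrow _ (Eventually.of_forall fun a => ?_))
    have := Nat.mul_le_mul_right (k a) hc
    omega
  have hT := (tendsto_finsetProd (Finset.Icc 1 e₁) fun i _ =>
      hone (3 ^ i) (Nat.one_le_pow _ _ (by norm_num))).mul
    (tendsto_finsetProd (Finset.Icc 1 e) fun i _ =>
      hhalf.mul (hone (2 ^ i * 3 ^ e₁) (Nat.succ_le_of_lt (by positivity))))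
  have hT' : Tendsto (fun a => (Tsize e e₁ (q a) (k a) : ℝ) /
      ((q a : ℝ) ^ (2 ^ e * 3 ^ e₁ * k a - k a)) ^ 2) l (𝓝 ((1 / 2) ^ e)) := by
    simp only [Finset.prod_const_one, mul_one, one_mul, Finset.prod_const, Nat.card_Icc,
      Nat.add_sub_cancel] at hT
    refine hT.congr' ?_
    filter_upwards [hq] with a ha
    exact (Tsize_div e e₁ (q a) (k a) ha).symm
  have hfin := hJ.div hT' (by positivity)
  have hc : (1 : ℝ) / (1 / 2) ^ e = 2 ^ e := by simp
  rw [hc] at hfin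
  refine hfin.congr' ?_
  filter_upwards [hgd.eventually_gt_atTop 0] with a ha
  simp only [Pi.div_apply]
  rw [← pow_two, div_div_div_cancel_right₀ (by positivity)]
  rfl

lemma tendsto_half :
    Tendsto (fun q : ℕ => (((q - 1) / 2 : ℕ) : ℝ) / ((q : ℝ) - 1)) atTop (𝓝 (1 / 2)) := by
  have hg : Tendsto (fun q : ℕ => (q : ℝ) - 1) atTop atTop :=
    tendsto_atTop_add_const_right _ (-1) tendsto_natCast_atTop_atTop
  have hlow : Tendsto (fun q : ℕ => 1 / 2 - ((q : ℝ) - 1)⁻¹) atTop (𝓝 (1 / 2 - 0)) :=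
    tendsto_const_nhds.sub hg.inv_tendsto_atTop
  rw [sub_zero] at hlow
  have key : ∀ q : ℕ, 3 ≤ q → 0 < (q : ℝ) - 1 ∧ 2 * (((q - 1) / 2 : ℕ) : ℝ) ≤ (q : ℝ) - 1 ∧
      (q : ℝ) - 1 ≤ 2 * (((q - 1) / 2 : ℕ) : ℝ) + 1 := by
    intro q hq
    have h1 : (3 : ℝ) ≤ q := by exact_mod_cast hq
    have h2 : 2 * ((q - 1) / 2) + 1 ≤ q := by omega
    have h3 : q ≤ 2 * ((q - 1) / 2) + 2 := by omega
    have h2' : 2 * (((q - 1) / 2 : ℕ) : ℝ) + 1 ≤ q := by exact_mod_cast h2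
    have h3' : (q : ℝ) ≤ 2 * (((q - 1) / 2 : ℕ) : ℝ) + 2 := by exact_mod_cast h3
    refine ⟨?_, ?_, ?_⟩ <;> linarith
  refine tendsto_of_tendsto_of_tendsto_of_le_of_le' hlow tendsto_const_nhds ?_ ?_
  · filter_upwards [eventually_ge_atTop 3] with q hq
    obtain ⟨h1, h2, h3⟩ := key q hq
    rw [le_div_iff₀ h1, sub_mul, inv_mul_cancel₀ h1.ne']
    linarith
  · filter_upwards [eventually_ge_atTop 3] with q hq
    obtain ⟨h1, h2, h3⟩ := key q hq
    rw [div_le_iff₀ h1]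
    linarith

/-- `J_q(2^e·3^{e₁}·k, 2k-2, k) / T(q,k) → 2^e`, both as `k → ∞` for a
fixed odd prime power `q ≥ 3`, and as `q → ∞` for a fixed `k ≥ 2`. -/
theorem statement13 (e e₁ : ℕ) (he : 1 ≤ e) (he₁ : 1 ≤ e₁) :
    (∀ q : ℕ, IsPrimePow q → Odd q → 3 ≤ q →
      Tendsto (fun k : ℕ =>
          (Jbound q (2 ^ e * 3 ^ e₁ * k) k : ℝ) / (Tsize e e₁ q k : ℝ))
        atTop (nhds (2 ^ e))) ∧
    (∀ k : ℕ, 2 ≤ k →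
      Tendsto (fun q : ℕ =>
          (Jbound q (2 ^ e * 3 ^ e₁ * k) k : ℝ) / (Tsize e e₁ q k : ℝ))
        atTop (nhds (2 ^ e))) := by
  constructor
  · intro q _ hodd hq
    have hq' : (3 : ℝ) ≤ q := by exact_mod_cast hq
    refine tendsto_ratio (q := fun _ => q) (k := fun k => k) e e₁ he
      (Eventually.of_forall fun _ => hq) (eventually_ge_atTop 2) ?_ ?_
    · exact (tendsto_pow_atTop_atTop_of_one_lt (by linarith)).comp (tendsto_sub_atTop_nat 1)
    · -- For odd `q` the quotient `⌊(q-1)/2⌋/(q-1)` is exactly `1/2`.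
      obtain ⟨m, rfl⟩ := hodd
      have hm : (m : ℝ) ≠ 0 := by
        have : m ≠ 0 := by omega
        exact_mod_cast this
      have h : (1 / 2 : ℝ) =
          (((2 * m + 1 - 1) / 2 : ℕ) : ℝ) / (((2 * m + 1 : ℕ) : ℝ) - 1) := by
        rw [show (2 * m + 1 - 1) / 2 = m by omega]
        push_cast
        field_simp
        ring
      rw [← h]
      exact tendsto_const_nhds
  · intro k hk
    refine tendsto_ratio (q := fun q => q) (k := fun _ => k) e e₁ he
      (eventually_ge_atTop 3) (Eventually.of_forall fun _ => hk) ?_ tendsto_half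
    exact (tendsto_pow_atTop (by omega)).comp tendsto_natCast_atTop_atTop
end
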